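/- For n ≥ 10, any orientation preserving C^1 action of an arbitrary finite index subgroup Γ of Aut(F_n) on the circle cannot be faithful; that is, every group homomorphism Γ → Diff^1_+(S^1) has nontrivial kernel. -/

import Mathlib

noncomputable section

open MeasureTheory

/-- The circle `S¹ = ℝ/ℤ`. -/
abbrev 𝕊 : Type := AddCircle (1 : ℝ)

/-- `F : ℝ → ℝ` is a lift of the circle bijection `f` witnessing that `f` is an
orientation preserving homeomorphism of the circle: `F` is a strictly increasing
homeomorphism of `ℝ` (equivalently, continuous and strictly increasing) satisfying
`F (x + 1) = F x + 1`, and projecting to `f`. -/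
def IsOPLift (f : Equiv.Perm 𝕊) (F : ℝ → ℝ) : Prop :=
  Continuous F ∧ StrictMono F ∧ (∀ x : ℝ, F (x + 1) = F x + 1) ∧
    ∀ x : ℝ, f (x : 𝕊) = (F x : 𝕊)

/-- `f` is an orientation preserving homeomorphism of the circle. -/
def IsOPHomeo (f : Equiv.Perm 𝕊) : Prop := ∃ F : ℝ → ℝ, IsOPLift f F

/-- `F` is a lift witnessing that `f` is an orientation preserving `C¹` diffeomorphism
of the circle: an orientation preserving lift which is `C¹` with nowhere vanishing
derivative. -/
def IsC1Lift (f : Equiv.Perm 𝕊) (F : ℝ → ℝ) : Prop :=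
  IsOPLift f F ∧ ContDiff ℝ 1 F ∧ ∀ x : ℝ, deriv F x ≠ 0

/-- `f` is an orientation preserving `C¹` diffeomorphism of the circle, i.e. an element
of `Diff¹₊(S¹)`. -/
def IsC1Diffeo (f : Equiv.Perm 𝕊) : Prop := ∃ F : ℝ → ℝ, IsC1Lift f F

/-- The free group of rank `n`. -/
abbrev FreeGrp (n : ℕ) : Type := FreeGroup (Fin n)

/-- The automorphism group `Aut(Fₙ)`. -/
abbrev AutF (n : ℕ) : Type := MulAut (FreeGrp n)

/-- The subgroup `IAₙ ≤ Aut(Fₙ)` of automorphisms acting trivially on the abelianization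
`Fₙ^{ab} ≅ ℤⁿ`, i.e. the kernel of the natural map `Aut(Fₙ) → Aut(ℤⁿ)`. -/
def IA (n : ℕ) : Subgroup (AutF n) where
  carrier := {e | ∀ x : FreeGrp n, Abelianization.of (e x) = Abelianization.of x}
  one_mem' := fun _ => rfl
  mul_mem' := by
    intro a b ha hb x
    have h : (a * b) x = a (b x) := rfl
    rw [h, ha (b x), hb x]
  inv_mem' := by
    intro a ha x
    have h := ha (a⁻¹ x)
    have h' : a (a⁻¹ x) = x := a.apply_symm_apply x
    rw [h'] at h
    exact h.symm

namespace CircAct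

abbrev F2 : Type := FreeGroup (Fin 2)
abbrev E4 : Type := FreeGroup (Fin 2 ⊕ Fin 2)

theorem free_ind_right {α : Type*} (P : FreeGroup α → Prop) (z0 : FreeGroup α) (h0 : P z0)
    (h1 : ∀ z a, P z → P (z * FreeGroup.of a)) (h2 : ∀ z a, P z → P (z * (FreeGroup.of a)⁻¹))
    (z : FreeGroup α) : P z := by
  have key : ∀ w : FreeGroup α, P (z0 * w) := by
    intro w
    have hw : w ∈ Subgroup.closure (Set.range (FreeGroup.of (α := α))) := by
      rw [FreeGroup.closure_range_of]; trivial
    induction hw using Subgroup.closure_induction_right with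
    | one => simpa using h0
    | mul_right x hx y hy ih =>
      obtain ⟨a, rfl⟩ := hy
      rw [← mul_assoc]; exact h1 _ _ ih
    | mul_inv_cancel x hx y hy ih =>
      obtain ⟨a, rfl⟩ := hy
      rw [← mul_assoc]; exact h2 _ _ ih
  have := key (z0⁻¹ * z)
  simpa using this

theorem kill_core (K : Subgroup F2) [K.FiniteIndex] (h N N' : F2 → ℝ)
    (hNc : ∀ z, N (z * FreeGroup.of 1) = N z + h (z * FreeGroup.of 1))
    (hNb : ∀ z, N (z * FreeGroup.of 0) = N z)
    (hN'b : ∀ z, N' (z * FreeGroup.of 0) = N' z + h (z * FreeGroup.of 0))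
    (hNK : ∀ κ ∈ K, ∀ z, N (κ * z) = N z)
    (hN'K : ∀ κ ∈ K, ∀ z, N' (κ * z) = N' z) (z : F2) : h z = 0 := by
  set b : F2 := FreeGroup.of 0
  set c : F2 := FreeGroup.of 1
  set k := K.normalCore.index with hk
  have hkpos : 0 < k := Nat.pos_of_ne_zero Subgroup.FiniteIndex.index_ne_zero
  have hpow : ∀ g : F2, g ^ k ∈ K.normalCore := fun g => Subgroup.pow_index_mem _ g
  have hr : ∀ z, ∀ κ ∈ K.normalCore, ∀ w, N (z * κ * w) = N (z * w) := by
    intro z κ hκ w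
    have h1 : z * κ * z⁻¹ ∈ K :=
      Subgroup.normalCore_le K ((inferInstance : K.normalCore.Normal).conj_mem κ hκ z)
    have := hNK _ h1 (z * w)
    rw [← this]; congr 1; group
  have hr' : ∀ z, ∀ κ ∈ K.normalCore, N' (z * κ) = N' z := by
    intro z κ hκ
    have h1 : z * κ * z⁻¹ ∈ K :=
      Subgroup.normalCore_le K ((inferInstance : K.normalCore.Normal).conj_mem κ hκ z)
    have := hN'K _ h1 z
    rw [← this]; congr 1; group
  have hsum : ∀ z, ∑ i ∈ Finset.range k, h (z * b ^ (i+1)) = 0 := by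
    intro z
    have : ∀ m : ℕ, N' (z * b ^ m) = N' z + ∑ i ∈ Finset.range m, h (z * b ^ (i+1)) := by
      intro m
      induction m with
      | zero => simp
      | succ m ih =>
        rw [Finset.sum_range_succ, pow_succ, ← mul_assoc, hN'b, ih]; ring
    have h2 := this k
    rw [hr' z _ (hpow b)] at h2
    linarith
  -- maximum
  have hfin : (Set.range N).Finite := by
    have : Set.range N ⊆ Set.range (fun q : F2 ⧸ K.normalCore => N q.out) := by
      rintro _ ⟨z, rfl⟩
      refine ⟨(z : F2 ⧸ K.normalCore), ?_⟩
      obtain ⟨κ, hκ⟩ := QuotientGroup.mk_out_eq_mul K.normalCore z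
      simp only [hκ]
      simpa using hr z κ κ.2 1
    exact (Set.finite_range _).subset this
  obtain ⟨_, ⟨z0, rfl⟩, hmax⟩ := Set.exists_max_image _ id hfin ⟨N 1, 1, rfl⟩
  have hmax' : ∀ z, N z ≤ N z0 := fun z => hmax _ ⟨z, rfl⟩
  have hcstep : ∀ z, h z = N z - N (z * c⁻¹) := by
    intro z
    have := hNc (z * c⁻¹)
    simp only [c, inv_mul_cancel_right] at this ⊢
    linarith
  have hb : ∀ z (i : ℕ), N (z * b ^ i) = N z := by
    intro z i
    induction i with
    | zero => simp
    | succ i ih => rw [pow_succ, ← mul_assoc, hNb, ih]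
  have hcinv : ∀ z, N z = N z0 → N (z * c⁻¹) = N z0 := by
    intro z hz
    have h1 : ∀ i ∈ Finset.range k, 0 ≤ h (z * b ^ (i+1)) := by
      intro i _
      rw [hcstep, hb, hz]
      linarith [hmax' (z * b ^ (i+1) * c⁻¹)]
    have h2 := (Finset.sum_eq_zero_iff_of_nonneg h1).1 (hsum z) (k-1) (by simp; omega)
    rw [Nat.sub_add_cancel hkpos, hcstep, hb, hz, hr z _ (hpow b)] at h2
    linarith
  have hcinvn : ∀ (m : ℕ) z, N z = N z0 → N (z * c⁻¹ ^ m) = N z0 := by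
    intro m
    induction m with
    | zero => intro z hz; simpa using hz
    | succ m ih => intro z hz; rw [pow_succ, ← mul_assoc]; exact hcinv _ (ih z hz)
  have hall : ∀ z, N z = N z0 := by
    intro z
    refine free_ind_right (fun z => N z = N z0) z0 rfl ?_ ?_ z
    · intro z a hz
      fin_cases a
      · exact (hNb z).trans hz
      · have h1 := hcinvn (k-1) z hz
        have h2 := hr z _ (hpow c) (c⁻¹ ^ (k-1))
        rw [h1] at h2
        rw [← h2]
        change N (z * c) = _
        congr 1
        obtain ⟨m, hm⟩ : ∃ m, k = m + 1 := ⟨k-1, by omega⟩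
        rw [hm]; simp [pow_succ']; group
    · intro z a hz
      fin_cases a
      · have := hNb (z * b⁻¹)
        rw [inv_mul_cancel_right] at this
        exact this.symm.trans hz
      · exact hcinv z hz
  rw [hcstep, hall z, hall (z * c⁻¹), sub_self]

/-- the letter substitutions -/
def iP : F2 →* E4 := FreeGroup.map Sum.inl
def iQ : F2 →* E4 := FreeGroup.map Sum.inr

def phi (i : Fin 2) (u : F2) : E4 →* E4 :=
  FreeGroup.lift (Sum.elim (fun k => FreeGroup.of (Sum.inl k))
    (fun k => if k = i then FreeGroup.of (Sum.inr k) * iP u else FreeGroup.of (Sum.inr k)))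

def zeta (i : Fin 2) (u z : F2) : E4 := phi i u (iQ z) * (iQ z)⁻¹

def cc (v u : F2) : E4 := iQ v * iP u * (iQ v)⁻¹

theorem phi_iP (i u w) : phi i u (iP w) = iP w := by
  have : (phi i u).comp iP = iP := by
    ext k; simp [phi, iP]
  exact DFunLike.congr_fun this w

theorem phi_iQ_self (i u) : phi i u (iQ (FreeGroup.of i)) = iQ (FreeGroup.of i) * iP u := by
  simp [phi, iQ]

theorem phi_iQ_ne (i k u) (h : k ≠ i) : phi i u (iQ (FreeGroup.of k)) = iQ (FreeGroup.of k) := by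
  simp [phi, iQ, h]

theorem zeta_one (i u) : zeta i u 1 = 1 := by simp [zeta]

theorem zeta_mul_left (i u κ z) :
    zeta i u (κ * z) = zeta i u κ * (iQ κ * zeta i u z * (iQ κ)⁻¹) := by
  simp [zeta]; group

theorem zeta_mul_self (i u z) :
    zeta i u (z * FreeGroup.of i) = zeta i u z * cc (z * FreeGroup.of i) u := by
  rw [zeta, map_mul, map_mul, phi_iQ_self]; simp [zeta, cc]; group

theorem zeta_mul_ne (i k u z) (h : k ≠ i) :
    zeta i u (z * FreeGroup.of k) = zeta i u z := by
  rw [zeta, map_mul, map_mul, phi_iQ_ne _ _ _ h]; simp [zeta]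

theorem zeta_mul_inv_self (i u z) :
    zeta i u (z * (FreeGroup.of i)⁻¹) = zeta i u z * (cc z u)⁻¹ := by
  have := zeta_mul_self i u (z * (FreeGroup.of i)⁻¹)
  rw [inv_mul_cancel_right] at this
  rw [this]; group

theorem zeta_mul_inv_ne (i k u z) (h : k ≠ i) :
    zeta i u (z * (FreeGroup.of k)⁻¹) = zeta i u z := by
  have := zeta_mul_ne i k u (z * (FreeGroup.of k)⁻¹) h
  rw [inv_mul_cancel_right] at this
  exact this.symm

theorem zeta_mem (H : Subgroup E4) (i u) (hH : ∀ v, cc v u ∈ H) (z) : zeta i u z ∈ H := by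
  refine free_ind_right (fun z => zeta i u z ∈ H) 1 (by simp [zeta_one]) ?_ ?_ z
  · intro z a hz
    by_cases h : a = i
    · subst h; rw [zeta_mul_self]; exact H.mul_mem hz (hH _)
    · rwa [zeta_mul_ne _ _ _ _ h]
  · intro z a hz
    by_cases h : a = i
    · subst h; rw [zeta_mul_inv_self]; exact H.mul_mem hz (H.inv_mem (hH _))
    · rwa [zeta_mul_inv_ne _ _ _ _ h]

theorem phi_cc (i u v u') :
    phi i u (cc v u') = zeta i u v * cc v u' * (zeta i u v)⁻¹ := by
  simp [cc, zeta, phi_iP]; group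

theorem phi_iQ (i u κ) : phi i u (iQ κ) = zeta i u κ * iQ κ := by simp [zeta]

theorem cc_mul (v u u') : cc v (u * u') = cc v u * cc v u' := by simp [cc]
theorem cc_mul_left (κ v u) : cc (κ * v) u = iQ κ * cc v u * (iQ κ)⁻¹ := by simp [cc]; group

/-- additive on a subgroup -/
def AddOn {G : Type*} [Group G] (H : Subgroup G) (Φ : G → ℝ) : Prop :=
  ∀ a ∈ H, ∀ b ∈ H, Φ (a * b) = Φ a + Φ b

theorem AddOn.one {G : Type*} [Group G] {H : Subgroup G} {Φ : G → ℝ} (h : AddOn H Φ) :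
    Φ 1 = 0 := by
  have := h 1 H.one_mem 1 H.one_mem; simp at this; exact this

theorem AddOn.inv {G : Type*} [Group G] {H : Subgroup G} {Φ : G → ℝ} (h : AddOn H Φ)
    {a : G} (ha : a ∈ H) : Φ a⁻¹ = - Φ a := by
  have := h a ha a⁻¹ (H.inv_mem ha)
  rw [mul_inv_cancel, h.one] at this; linarith

theorem AddOn.conj {G : Type*} [Group G] {H : Subgroup G} {Φ : G → ℝ} (h : AddOn H Φ)
    {a b : G} (ha : a ∈ H) (hb : b ∈ H) : Φ (a * b * a⁻¹) = Φ b := by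
  rw [h _ (H.mul_mem ha hb) _ (H.inv_mem ha), h _ ha _ hb, h.inv ha]; ring

theorem AddOn.zpow {G : Type*} [Group G] {H : Subgroup G} {Φ : G → ℝ} (h : AddOn H Φ)
    {a : G} (ha : a ∈ H) (j : ℤ) : Φ (a ^ j) = j * Φ a := by
  induction j with
  | zero => simp [h.one]
  | succ n ih => rw [zpow_add_one, h _ (H.zpow_mem ha _) _ ha, ih]; push_cast; ring
  | pred n ih =>
    rw [zpow_sub_one, h _ (H.zpow_mem ha _) _ (H.inv_mem ha), ih, h.inv ha]; push_cast; ring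

theorem AddOn.comap {G G' : Type*} [Group G] [Group G'] {H : Subgroup G} {Φ : G → ℝ}
    (h : AddOn H Φ) (f : G' →* G) : AddOn (H.comap f) (fun x => Φ (f x)) := by
  intro a ha b hb
  simp only [map_mul]
  exact h _ ha _ hb

theorem AddOn.mono {G : Type*} [Group G] {H H' : Subgroup G} {Φ : G → ℝ}
    (h : AddOn H Φ) (hle : H' ≤ H) : AddOn H' Φ :=
  fun a ha b hb => h a (hle ha) b (hle hb)

theorem kill (H : Subgroup E4) (Φ : E4 → ℝ) (hΦ : AddOn H Φ) (u : F2)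
    (K : Subgroup F2) [K.FiniteIndex] (hc : ∀ v, cc v u ∈ H) (hK : ∀ κ ∈ K, iQ κ ∈ H)
    (hz : ∀ i, ∀ κ ∈ K, Φ (zeta i u κ) = 0) (v : F2) : Φ (cc v u) = 0 := by
  have hinv : ∀ i, ∀ κ ∈ K, ∀ z, Φ (zeta i u (κ * z)) = Φ (zeta i u z) := by
    intro i κ hκ z
    have hzm := zeta_mem H i u hc
    rw [zeta_mul_left, hΦ _ (hzm _) _ (H.mul_mem (H.mul_mem (hK κ hκ) (hzm _)) (H.inv_mem (hK κ hκ))),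
      hz i κ hκ, hΦ.conj (hK κ hκ) (hzm _), zero_add]
  have hs : ∀ i z, Φ (zeta i u (z * FreeGroup.of i)) =
      Φ (zeta i u z) + Φ (cc (z * FreeGroup.of i) u) := by
    intro i z
    rw [zeta_mul_self, hΦ _ (zeta_mem H i u hc _) _ (hc _)]
  exact kill_core K (fun z => Φ (cc z u)) (fun z => Φ (zeta 1 u z)) (fun z => Φ (zeta 0 u z))
    (hs 1) (fun z => by simp only [zeta_mul_ne 1 0 u z (by decide)])
    (hs 0) (hinv 1) (hinv 0) v

/-- if `κ ↦ Φ (ζ κ)` vanishes on generators it vanishes on the subgroup -/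
theorem zeta_gen (H : Subgroup E4) (Φ : E4 → ℝ) (hΦ : AddOn H Φ) (u : F2) (i : Fin 2)
    (U : Set F2) (hc : ∀ v, cc v u ∈ H) (hK : ∀ κ ∈ Subgroup.closure U, iQ κ ∈ H)
    (hz : ∀ κ ∈ U, Φ (zeta i u κ) = 0) : ∀ κ ∈ Subgroup.closure U, Φ (zeta i u κ) = 0 := by
  have hzm := zeta_mem H i u hc
  have hmul : ∀ x ∈ Subgroup.closure U, ∀ y, Φ (zeta i u (x * y)) = Φ (zeta i u x) + Φ (zeta i u y) := by
    intro κ hκ z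
    rw [zeta_mul_left, hΦ _ (hzm _) _ (H.mul_mem (H.mul_mem (hK κ hκ) (hzm _)) (H.inv_mem (hK κ hκ))),
       hΦ.conj (hK κ hκ) (hzm _)]
  intro κ hκ
  induction hκ using Subgroup.closure_induction with
  | mem x hx => exact hz x hx
  | one => simp [zeta_one, hΦ.one]
  | mul x y hx hy h1 h2 => rw [hmul x hx, h1, h2, add_zero]
  | inv x hx h1 =>
    have := hmul x hx x⁻¹
    rw [mul_inv_cancel, zeta_one, hΦ.one, h1] at this
    linarith

theorem zeta_zpow (H : Subgroup E4) (Φ : E4 → ℝ) (hΦ : AddOn H Φ) (u : F2) (i : Fin 2)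
    (hc : ∀ v, cc v u ∈ H) (j : ℤ) (z : F2) :
    Φ (zeta i (u ^ j) z) = j * Φ (zeta i u z) := by
  have hccz : ∀ v, cc v (u ^ j) = (cc v u) ^ j := by
    intro v; simp [cc]
  have hc' : ∀ v, cc v (u ^ j) ∈ H := fun v => by rw [hccz]; exact H.zpow_mem (hc v) j
  have hh : ∀ v, Φ (cc v (u ^ j)) = j * Φ (cc v u) := fun v => by rw [hccz, hΦ.zpow (hc v)]
  have hzm := zeta_mem H i u hc
  have hzm' := zeta_mem H i (u ^ j) hc'
  refine free_ind_right (fun z => Φ (zeta i (u ^ j) z) = j * Φ (zeta i u z)) 1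
    (by simp [zeta_one, hΦ.one]) ?_ ?_ z
  · intro z a hz
    by_cases h : a = i
    · subst h; simp only [zeta_mul_self]
      rw [hΦ _ (hzm' _) _ (hc' _), hΦ _ (hzm _) _ (hc _), hz, hh]; ring
    · simpa only [zeta_mul_ne _ _ _ _ h] using hz
  · intro z a hz
    by_cases h : a = i
    · subst h; simp only [zeta_mul_inv_self]
      rw [hΦ _ (hzm' _) _ (H.inv_mem (hc' _)), hΦ _ (hzm _) _ (H.inv_mem (hc _)), hz, hΦ.inv (hc' _),
        hΦ.inv (hc _), hh]; ring
    · simpa only [zeta_mul_inv_ne _ _ _ _ h] using hz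

end CircAct

namespace CircAct
open Filter Topology

structure LineAct {G : Type*} [Group G] (M : Subgroup G) (L : G → ℝ → ℝ) : Prop where
  one : ∀ x, L 1 x = x
  mul : ∀ g ∈ M, ∀ h ∈ M, ∀ x, L (g * h) x = L g (L h x)
  mono : ∀ g ∈ M, StrictMono (L g)
  smooth : ∀ g ∈ M, ContDiff ℝ 1 (L g)
  dne : ∀ g ∈ M, ∀ x, deriv (L g) x ≠ 0

variable {G : Type*} [Group G] {M : Subgroup G} {L : G → ℝ → ℝ}

theorem LineAct.inv_left (hL : LineAct M L) {g : G} (hg : g ∈ M) (x : ℝ) : L g⁻¹ (L g x) = x := by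
  rw [← hL.mul _ (M.inv_mem hg) _ hg, inv_mul_cancel, hL.one]

theorem LineAct.inv_right (hL : LineAct M L) {g : G} (hg : g ∈ M) (x : ℝ) : L g (L g⁻¹ x) = x := by
  rw [← hL.mul _ hg _ (M.inv_mem hg), mul_inv_cancel, hL.one]

theorem LineAct.inv_fix (hL : LineAct M L) {g : G} (hg : g ∈ M) {x : ℝ} (h : L g x = x) :
    L g⁻¹ x = x := by
  conv_lhs => rw [← h]
  exact hL.inv_left hg x

theorem LineAct.strict (hL : LineAct M L) {g : G} (hg : g ∈ M) (x : ℝ) :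
    HasStrictDerivAt (L g) (deriv (L g) x) x :=
  (hL.smooth g hg).contDiffAt.hasStrictDerivAt (by simp)

theorem LineAct.cont (hL : LineAct M L) {g : G} (hg : g ∈ M) : Continuous (L g) :=
  (hL.smooth g hg).continuous

theorem LineAct.dpos (hL : LineAct M L) {g : G} (hg : g ∈ M) (x : ℝ) : 0 < deriv (L g) x :=
  lt_of_le_of_ne (hL.mono g hg).monotone.deriv_nonneg (hL.dne g hg x).symm

/-- tends to q from the right -/
theorem LineAct.tendsto_right (hL : LineAct M L) {g : G} (hg : g ∈ M) {q : ℝ} (h : L g q = q) :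
    Tendsto (L g) (𝓝[>] q) (𝓝[>] q) := by
  refine tendsto_nhdsWithin_iff.2 ⟨?_, ?_⟩
  · have := (hL.cont hg).tendsto q
    rw [h] at this
    exact this.mono_left nhdsWithin_le_nhds
  · filter_upwards [self_mem_nhdsWithin] with x hx
    have := hL.mono g hg hx
    rw [h] at this; exact this

/-- strict derivative estimate -/
theorem strict_est {f : ℝ → ℝ} {d q : ℝ} (hf : HasStrictDerivAt f d q) {ε : ℝ} (hε : 0 < ε)
    {l : Filter ℝ} {a b : ℝ → ℝ} (ha : Tendsto a l (𝓝 q)) (hb : Tendsto b l (𝓝 q)) :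
    ∀ᶠ x in l, |f (a x) - f (b x) - (a x - b x) * d| ≤ ε * |a x - b x| := by
  have h1 := (hf.isLittleO).def hε
  have h2 : Tendsto (fun x => (a x, b x)) l (𝓝 (q, q)) := by
    rw [nhds_prod_eq]; exact ha.prodMk hb
  have := h2.eventually h1
  simpa [mul_comm] using this

theorem expand_est (hL : LineAct M L) {g s : G} (hg : g ∈ M) (hs : s ∈ M) {q : ℝ}
    (hgq : L g q = q) (hsq : L s q = q) :
    ∀ᶠ x in 𝓝[>] q, |L (g⁻¹ * s * g) x - x| * (L g x - q) ≤
      3 / 2 * (|L s (L g x) - L g x| * (x - q)) := by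
  have hg' := M.inv_mem hg
  set d := deriv (L g⁻¹) q with hd
  have hdp : 0 < d := hL.dpos hg' q
  have hst := hL.strict hg' q
  have t1 : Tendsto (L g) (𝓝[>] q) (𝓝 q) := (hL.tendsto_right hg hgq).mono_right nhdsWithin_le_nhds
  have t2 : Tendsto (fun x => L s (L g x)) (𝓝[>] q) (𝓝 q) :=
    ((hL.tendsto_right hs hsq).comp (hL.tendsto_right hg hgq)).mono_right nhdsWithin_le_nhds
  have e1 := strict_est hst (show 0 < d / 5 by positivity) t2 t1
  have e2 := strict_est hst (show 0 < d / 5 by positivity) t1 tendsto_const_nhds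
  filter_upwards [e1, e2, self_mem_nhdsWithin] with x h1 h2 hx
  have hx' : q < x := hx
  have hy : q < L g x := by have := hL.mono g hg hx'; rwa [hgq] at this
  rw [hL.mul _ (M.mul_mem hg' hs) _ hg, hL.mul _ hg' _ hs]
  rw [hL.inv_left hg] at h1 h2
  rw [hL.inv_fix hg hgq] at h2
  rw [abs_of_pos (sub_pos.2 hy)] at h2
  have h3 : 4/5 * d * (L g x - q) ≤ x - q := by
    have := (abs_le.1 h2).1
    nlinarith
  have h4 : |L g⁻¹ (L s (L g x)) - x| ≤ 6/5 * d * |L s (L g x) - L g x| := by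
    have := abs_add_le (L g⁻¹ (L s (L g x)) - x - (L s (L g x) - L g x) * d)
      ((L s (L g x) - L g x) * d)
    rw [sub_add_cancel, abs_mul (L s (L g x) - L g x) d, abs_of_pos hdp] at this
    nlinarith
  have h5 := abs_nonneg (L s (L g x) - L g x)
  calc |L g⁻¹ (L s (L g x)) - x| * (L g x - q)
      ≤ 6/5 * d * |L s (L g x) - L g x| * (L g x - q) :=
        mul_le_mul_of_nonneg_right h4 (sub_pos.2 hy).le
    _ = 3/2 * (|L s (L g x) - L g x| * (4/5 * d * (L g x - q))) := by ring
    _ ≤ _ := by gcongr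

/-- total displacement -/
def disp (L : G → ℝ → ℝ) (S : Finset G) (x : ℝ) : ℝ := ∑ s ∈ S, |L s x - x|

def edisp (L : G → ℝ → ℝ) (S : Finset G) (g : G) (x : ℝ) : ℝ := ∑ s ∈ S, |L (g⁻¹ * s * g) x - x|

theorem disp_nonneg (S : Finset G) (x : ℝ) : 0 ≤ disp L S x :=
  Finset.sum_nonneg fun _ _ => abs_nonneg _

theorem bad_frequently (hL : LineAct M L) (q : ℝ) (S D : Finset G)
    (hS : ∀ s ∈ S, s ∈ M ∧ L s q = q)
    (hD : ∀ g ∈ D, g ∈ M ∧ L g q = q)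
    (hmove : ∃ᶠ x in 𝓝[>] q, ∃ s ∈ S, L s x ≠ x) :
    ∃ᶠ x in 𝓝[>] q, 0 < disp L S x ∧ ∀ g ∈ D,
      edisp L S g x < 3 * disp L S x ∨ edisp L S g⁻¹ x < 3 * disp L S x := by
  intro hcon
  -- bound on the displacement
  have hB : ∃ B : ℝ, 0 < B ∧ ∀ᶠ x in 𝓝[>] q, disp L S x ≤ B * (x - q) := by
    have : ∀ s ∈ S, ∃ B : ℝ, 0 < B ∧ ∀ᶠ x in 𝓝[>] q, |L s x - x| ≤ B * (x - q) := by
      intro s hs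
      obtain ⟨h1, h2⟩ := hS s hs
      have e := strict_est (hL.strict h1 q) one_pos
        (tendsto_id.mono_left nhdsWithin_le_nhds : Tendsto id (𝓝[>] q) (𝓝 q)) tendsto_const_nhds
      refine ⟨2 + deriv (L s) q, by linarith [hL.dpos h1 q], ?_⟩
      filter_upwards [e, self_mem_nhdsWithin] with x hx hxq
      have hxq' : q < x := hxq
      rw [h2, id, abs_of_pos (sub_pos.2 hxq')] at hx
      have hd := hL.dpos h1 q
      have := abs_le.1 hx
      rw [abs_le]
      have h3 := mul_pos hd (sub_pos.2 hxq')
      constructor <;> nlinarith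
    choose! B hB0 hB using this
    refine ⟨∑ s ∈ S, B s + 1, ?_, ?_⟩
    · have := Finset.sum_nonneg fun s hs => (hB0 s hs).le
      linarith
    · filter_upwards [(S.eventually_all).2 hB, self_mem_nhdsWithin] with x hx hxq
      have hxq' : q < x := hxq
      calc disp L S x ≤ ∑ s ∈ S, B s * (x - q) := Finset.sum_le_sum hx
        _ = (∑ s ∈ S, B s) * (x - q) := by rw [Finset.sum_mul]
        _ ≤ _ := by nlinarith
  obtain ⟨B, hB0, hB⟩ := hB
  have hE : ∀ᶠ x in 𝓝[>] q, ∀ g ∈ D, ∀ s ∈ S,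
      (|L (g⁻¹ * s * g) x - x| * (L g x - q) ≤ 3 / 2 * (|L s (L g x) - L g x| * (x - q))) ∧
      (|L (g⁻¹⁻¹ * s * g⁻¹) x - x| * (L g⁻¹ x - q) ≤
        3 / 2 * (|L s (L g⁻¹ x) - L g⁻¹ x| * (x - q))) := by
    refine (D.eventually_all).2 fun g hg => (S.eventually_all).2 fun s hs => ?_
    obtain ⟨h1, h2⟩ := hS s hs
    obtain ⟨h3, h4⟩ := hD g hg
    exact (expand_est hL h3 h1 h4 h2).and
      (expand_est hL (M.inv_mem h3) h1 (hL.inv_fix h3 h4) h2)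
  have hall := (hcon.and hB).and hE
  obtain ⟨δ, hδ, hU⟩ : ∃ δ, q < δ ∧ Set.Ioo q δ ⊆ {x | (¬ (0 < disp L S x ∧ ∀ g ∈ D,
      edisp L S g x < 3 * disp L S x ∨ edisp L S g⁻¹ x < 3 * disp L S x) ∧
      disp L S x ≤ B * (x - q)) ∧ ∀ g ∈ D, ∀ s ∈ S,
      (|L (g⁻¹ * s * g) x - x| * (L g x - q) ≤ 3 / 2 * (|L s (L g x) - L g x| * (x - q))) ∧
      (|L (g⁻¹⁻¹ * s * g⁻¹) x - x| * (L g⁻¹ x - q) ≤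
        3 / 2 * (|L s (L g⁻¹ x) - L g⁻¹ x| * (x - q)))} :=
    (mem_nhdsGT_iff_exists_Ioo_subset).1 hall
  obtain ⟨x0, ⟨s0, hs0, hne⟩, hx0⟩ := (hmove.and_eventually (Ioo_mem_nhdsGT hδ)).exists
  have hd0 : 0 < disp L S x0 := by
    refine lt_of_lt_of_le (abs_pos.2 (sub_ne_zero.2 hne)) ?_
    exact Finset.single_le_sum (f := fun s => |L s x0 - x0|) (fun _ _ => abs_nonneg _) hs0
  -- one step
  have aux : ∀ x ∈ Set.Ioo q δ, ∀ g, (g ∈ M ∧ L g q = q) → L g x ≤ x → 0 < disp L S x →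
      3 * disp L S x ≤ edisp L S g x → (∀ s ∈ S,
      |L (g⁻¹ * s * g) x - x| * (L g x - q) ≤ 3 / 2 * (|L s (L g x) - L g x| * (x - q))) →
      ∃ y ∈ Set.Ioo q δ, 2 * (disp L S x / (x - q)) ≤ disp L S y / (y - q) := by
    intro x hx g hg hgx hd he hs
    have hy : q < L g x := by have := hL.mono g hg.1 hx.1; rwa [hg.2] at this
    refine ⟨L g x, ⟨hy, hgx.trans_lt hx.2⟩, ?_⟩
    have h1 : edisp L S g x * (L g x - q) ≤ 3 / 2 * (disp L S (L g x) * (x - q)) := by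
      rw [edisp, disp, Finset.sum_mul, Finset.sum_mul, Finset.mul_sum]
      exact Finset.sum_le_sum hs
    have hyq := sub_pos.2 hy
    have hxq := sub_pos.2 hx.1
    rw [← mul_div_assoc, div_le_div_iff₀ hxq hyq]
    nlinarith
  have step : ∀ x ∈ Set.Ioo q δ, 0 < disp L S x →
      ∃ y ∈ Set.Ioo q δ, 2 * (disp L S x / (x - q)) ≤ disp L S y / (y - q) := by
    intro x hx hd
    obtain ⟨⟨h1, -⟩, h2⟩ := hU hx
    have h1' : ∃ g ∈ D, 3 * disp L S x ≤ edisp L S g x ∧ 3 * disp L S x ≤ edisp L S g⁻¹ x := by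
      by_contra hne
      apply h1
      refine ⟨hd, fun g hg => ?_⟩
      by_contra hor
      push Not at hor
      exact hne ⟨g, hg, hor⟩
    obtain ⟨g, hg, he1, he2⟩ := h1'
    obtain ⟨h3, h4⟩ := hD g hg
    rcases le_total (L g x) x with h | h
    · exact aux x hx g ⟨h3, h4⟩ h hd he1 fun s hs => (h2 g hg s hs).1
    · have : L g⁻¹ x ≤ x := by
        have := (hL.mono _ (M.inv_mem h3)).monotone h
        rwa [hL.inv_left h3] at this
      exact aux x hx g⁻¹ ⟨M.inv_mem h3, hL.inv_fix h3 h4⟩ this hd he2 fun s hs => (h2 g hg s hs).2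
  set a := disp L S x0 / (x0 - q)
  have ha : 0 < a := div_pos hd0 (sub_pos.2 hx0.1)
  have iter : ∀ k : ℕ, ∃ x ∈ Set.Ioo q δ, 2 ^ k * a ≤ disp L S x / (x - q) := by
    intro k
    induction k with
    | zero => exact ⟨x0, hx0, by simp [a]⟩
    | succ k ih =>
      obtain ⟨x, hx, hk⟩ := ih
      have hpos : 0 < disp L S x / (x - q) := lt_of_lt_of_le (by positivity) hk
      have hd : 0 < disp L S x := by
        have hxq := sub_pos.2 hx.1
        rwa [div_pos_iff_of_pos_right hxq] at hpos
      obtain ⟨y, hy, hyy⟩ := step x hx hd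
      exact ⟨y, hy, by rw [pow_succ]; linarith⟩
  obtain ⟨k, hk⟩ := pow_unbounded_of_one_lt (B / a) (one_lt_two : (1:ℝ) < 2)
  obtain ⟨x, hx, hxk⟩ := iter k
  have h1 := (hU hx).1.2
  have hxq := sub_pos.2 hx.1
  rw [div_lt_iff₀ ha] at hk
  rw [le_div_iff₀ hxq] at hxk
  nlinarith

end CircAct

namespace CircAct
open Filter Topology

section
variable {G : Type*} [Group G] {M : Subgroup G} {L : G → ℝ → ℝ}

/-- elements with asymptotic displacement -/
def AsympOK (M : Subgroup G) (L : G → ℝ → ℝ) (q : ℝ) (m : ℝ → ℝ) (l : Filter ℝ) (g : G) (a : ℝ) : Prop :=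
  g ∈ M ∧ L g q = q ∧ HasStrictDerivAt (L g) 1 q ∧ Tendsto (fun x => (L g x - x) / m x) l (𝓝 a)

theorem asymp_err (hL : LineAct M L) {q : ℝ} {m : ℝ → ℝ} {l : Filter ℝ} (hl : l ≤ 𝓝 q)
    {g h : G} {a : ℝ} (hgd : HasStrictDerivAt (L g) 1 q)
    (hh : h ∈ M) (hhq : L h q = q) (hha : Tendsto (fun x => (L h x - x) / m x) l (𝓝 a)) :
    Tendsto (fun x => (L g (L h x) - x) / m x - ((L g x - x) / m x + (L h x - x) / m x)) l (𝓝 0) := by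
  rw [Metric.tendsto_nhds]
  intro ε hε
  set η := ε / (2 * (|a| + 1)) with hη
  have hηp : 0 < η := by positivity
  have t1 : Tendsto (L h) l (𝓝 q) := by
    have := (hL.cont hh).tendsto q
    rw [hhq] at this
    exact this.mono_left hl
  have e1 := strict_est hgd hηp t1 (tendsto_id.mono_left hl : Tendsto id l (𝓝 q))
  have e2 : ∀ᶠ x in l, |(L h x - x) / m x| < |a| + 1 := by
    have := hha.abs
    exact this.eventually (gt_mem_nhds (by linarith))
  filter_upwards [e1, e2] with x h1 h2
  rw [Real.dist_eq, sub_zero]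
  have : (L g (L h x) - x) / m x - ((L g x - x) / m x + (L h x - x) / m x)
      = (L g (L h x) - L g (id x) - (L h x - id x) * 1) / m x := by
    simp only [id]; ring
  rw [this, abs_div]
  calc _ ≤ η * |L h x - id x| / |m x| := by gcongr
    _ = η * |(L h x - x) / m x| := by rw [abs_div]; simp only [id]; ring
    _ ≤ η * (|a| + 1) := by gcongr
    _ = ε / 2 := by rw [hη]; field_simp
    _ < ε := by linarith

theorem AsympOK.mul (hL : LineAct M L) {q : ℝ} {m : ℝ → ℝ} {l : Filter ℝ} (hl : l ≤ 𝓝 q)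
    {g h : G} {a b : ℝ} (hg : AsympOK M L q m l g a) (hh : AsympOK M L q m l h b) :
    AsympOK M L q m l (g * h) (a + b) := by
  obtain ⟨g1, g2, g3, g4⟩ := hg
  obtain ⟨h1, h2, h3, h4⟩ := hh
  have hfun : L (g * h) = L g ∘ L h := funext (hL.mul g g1 h h1)
  refine ⟨M.mul_mem g1 h1, by rw [hfun]; simp [g2, h2], ?_, ?_⟩
  · rw [hfun]
    have := HasStrictDerivAt.comp q (h₂ := L g) (h := L h) (by rw [h2]; exact g3) h3
    simpa using this
  · have := (asymp_err hL hl g3 h1 h2 h4).add (g4.add h4)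
    simpa [hfun] using this

theorem AsympOK.inv (hL : LineAct M L) {q : ℝ} {m : ℝ → ℝ} {l : Filter ℝ} (hl : l ≤ 𝓝 q)
    {g : G} {a : ℝ} (hg : AsympOK M L q m l g a) :
    AsympOK M L q m l g⁻¹ (-a) := by
  obtain ⟨g1, g2, g3, g4⟩ := hg
  have i1 := M.inv_mem g1
  have i2 := hL.inv_fix g1 g2
  have i3 : HasStrictDerivAt (L g⁻¹) 1 q := by
    have h0 := hL.strict i1 q
    have := HasStrictDerivAt.comp q (h₂ := L g⁻¹) (h := L g) (by rw [g2]; exact h0) g3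
    have hid : L g⁻¹ ∘ L g = id := funext (hL.inv_left g1)
    rw [hid] at this
    have h2 := this.hasDerivAt.unique (hasDerivAt_id q)
    rw [mul_one] at h2
    rwa [h2] at h0
  refine ⟨i1, i2, i3, ?_⟩
  have := ((asymp_err hL hl i3 g1 g2 g4).add g4).neg
  simp only [hL.inv_left g1] at this
  convert this using 2
  · ring
  · ring

theorem asymp (hL : LineAct M L) (q : ℝ) (S F : Finset G)
    (hS : ∀ s ∈ S, s ∈ M ∧ L s q = q ∧ deriv (L s) q = 1)
    (hF : ∀ g ∈ F, g ∈ M ∧ L g q = q)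
    (hmove : ∃ᶠ x in 𝓝[>] q, ∃ s ∈ S, L s x ≠ x) :
    ∃ Φ : G → ℝ, AddOn (Subgroup.closure (S : Set G)) Φ ∧ (∃ s ∈ S, Φ s ≠ 0) ∧
      (∀ g, (∀ᶠ x in 𝓝[>] q, L g x = x) → Φ g = 0) ∧
      ∀ T ∈ F, ∀ s ∈ S, ∀ z, (∀ j : ℤ, T ^ j * s * (T ^ j)⁻¹ ∈ Subgroup.closure (S : Set G)) →
        (∀ Ψ : G → ℝ, AddOn (Subgroup.closure (S : Set G)) Ψ → ∀ j : ℤ,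
          Ψ (T ^ j * s * (T ^ j)⁻¹) = Ψ s + j * Ψ z) → Φ z = 0 := by
  classical
  set bad : ℕ → Set ℝ := fun j => {x | 0 < disp L S x ∧ ∀ i ≤ j, ∀ T ∈ F,
    edisp L S (T ^ i) x < 3 * disp L S x ∨ edisp L S (T ^ i)⁻¹ x < 3 * disp L S x} with hbad
  have hfreq : ∀ j, ∃ᶠ x in 𝓝[>] q, x ∈ bad j := by
    intro j
    have hfixpow : ∀ g ∈ F, ∀ i : ℕ, L (g ^ i) q = q := by
      intro g hg i
      induction i with
      | zero => simp [hL.one]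
      | succ i ih => rw [pow_succ, hL.mul _ (M.pow_mem (hF g hg).1 i) _ (hF g hg).1, (hF g hg).2, ih]
    have := bad_frequently hL q S ((Finset.range (j+1) ×ˢ F).image fun p => p.2 ^ p.1)
      (fun s hs => ⟨(hS s hs).1, (hS s hs).2.1⟩)
      (by
        intro g hg
        obtain ⟨⟨i, T⟩, hp, rfl⟩ := Finset.mem_image.1 hg
        have hT := (Finset.mem_product.1 hp).2
        exact ⟨M.pow_mem (hF T hT).1 i, hfixpow T hT i⟩) hmove
    refine this.mono fun x hx => ⟨hx.1, fun i hi T hT => hx.2 _ ?_⟩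
    exact Finset.mem_image.2 ⟨(i, T), Finset.mem_product.2 ⟨by simp; omega, hT⟩, rfl⟩
  have hanti : Antitone bad := fun i j hij x hx => ⟨hx.1, fun k hk => hx.2 k (hk.trans hij)⟩
  have hne : (⨅ j, (𝓝[>] q ⊓ 𝓟 (bad j))).NeBot := by
    refine Filter.iInf_neBot_of_directed ?_ fun j => ?_
    · refine directed_of_isDirected_le fun i j hij => ?_
      exact inf_le_inf_left _ (principal_mono.2 (hanti hij))
    · exact (frequently_mem_iff_neBot).1 (hfreq j)
  set l : Ultrafilter ℝ := Ultrafilter.of (⨅ j, (𝓝[>] q ⊓ 𝓟 (bad j)))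
  have hl : ∀ j, (l : Filter ℝ) ≤ 𝓝[>] q ⊓ 𝓟 (bad j) := fun j =>
    (Ultrafilter.of_le _).trans (iInf_le _ j)
  have hlq : (l : Filter ℝ) ≤ 𝓝[>] q := (hl 0).trans inf_le_left
  have hlq' : (l : Filter ℝ) ≤ 𝓝 q := hlq.trans nhdsWithin_le_nhds
  have hlb : ∀ j, ∀ᶠ x in (l : Filter ℝ), x ∈ bad j := fun j =>
    (hl j).trans inf_le_right (mem_principal_self _)
  set m := disp L S with hm
  have hmpos : ∀ᶠ x in (l : Filter ℝ), 0 < m x := (hlb 0).mono fun x hx => hx.1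
  have hgen : ∀ s ∈ S, ∃ a, AsympOK M L q m l s a := by
    intro s hs
    obtain ⟨h1, h2, h3⟩ := hS s hs
    have : ∃ a ∈ Set.Icc (-1:ℝ) 1, Tendsto (fun x => (L s x - x) / m x) l (𝓝 a) := by
      have hc := (isCompact_Icc (a := (-1:ℝ)) (b := 1)).ultrafilter_le_nhds
        (l.map (fun x => (L s x - x) / m x)) (by
          rw [Ultrafilter.coe_map, le_principal_iff, Filter.mem_map]
          filter_upwards [hmpos] with x hx
          rw [Set.mem_preimage, Set.mem_Icc, ← abs_le, abs_div, abs_of_pos hx, div_le_one hx]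
          exact Finset.single_le_sum (f := fun s => |L s x - x|) (fun _ _ => abs_nonneg _) hs)
      exact hc
    obtain ⟨a, -, ha⟩ := this
    refine ⟨a, h1, h2, ?_, ha⟩
    have := hL.strict h1 q
    rwa [h3] at this
  have hcl : ∀ g ∈ Subgroup.closure (S : Set G), ∃ a, AsympOK M L q m l g a := by
    intro g hg
    induction hg using Subgroup.closure_induction with
    | mem x hx => exact hgen x hx
    | one =>
      refine ⟨0, M.one_mem, hL.one q, ?_, ?_⟩
      · have : L 1 = id := funext hL.one
        rw [this]; exact hasStrictDerivAt_id q
      · simp only [hL.one]; simp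
    | mul x y _ _ h1 h2 =>
      obtain ⟨a, ha⟩ := h1
      obtain ⟨b, hb⟩ := h2
      exact ⟨a + b, ha.mul hL hlq' hb⟩
    | inv x _ h1 =>
      obtain ⟨a, ha⟩ := h1
      exact ⟨-a, ha.inv hL hlq'⟩
  set Φ : G → ℝ := fun g => limUnder (l : Filter ℝ) (fun x => (L g x - x) / m x) with hΦ
  have hlim : ∀ g a, AsympOK M L q m l g a → Φ g = a := fun g a h => h.2.2.2.limUnder_eq
  have hlim' : ∀ g ∈ Subgroup.closure (S : Set G),
      Tendsto (fun x => (L g x - x) / m x) l (𝓝 (Φ g)) := by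
    intro g hg
    obtain ⟨a, ha⟩ := hcl g hg
    rw [hlim g a ha]; exact ha.2.2.2
  have hadd : AddOn (Subgroup.closure (S : Set G)) Φ := by
    intro g hg h hh
    obtain ⟨a, ha⟩ := hcl g hg
    obtain ⟨b, hb⟩ := hcl h hh
    rw [hlim g a ha, hlim h b hb]
    exact hlim _ _ (ha.mul hL hlq' hb)
  have hsum : ∑ s ∈ S, |Φ s| = 1 := by
    have t1 : Tendsto (fun x => ∑ s ∈ S, |(L s x - x) / m x|) l (𝓝 (∑ s ∈ S, |Φ s|)) :=
      tendsto_finsetSum _ fun s hs => (hlim' s (Subgroup.subset_closure hs)).abs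
    have t2 : Tendsto (fun x => ∑ s ∈ S, |(L s x - x) / m x|) l (𝓝 1) := by
      refine Tendsto.congr' ?_ tendsto_const_nhds
      filter_upwards [hmpos] with x hx
      simp only [abs_div, abs_of_pos hx]
      rw [← Finset.sum_div]
      exact (div_self hx.ne').symm
    exact tendsto_nhds_unique t1 t2
  have hle : ∀ s ∈ S, |Φ s| ≤ 1 := by
    intro s hs
    rw [← hsum]
    exact Finset.single_le_sum (f := fun s => |Φ s|) (fun _ _ => abs_nonneg _) hs
  refine ⟨Φ, hadd, ?_, ?_, ?_⟩
  · by_contra hcon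
    push Not at hcon
    rw [Finset.sum_eq_zero fun s hs => by rw [hcon s hs, abs_zero]] at hsum
    exact zero_ne_one hsum
  · intro g hg
    have : Tendsto (fun x => (L g x - x) / m x) l (𝓝 0) := by
      refine Tendsto.congr' ?_ tendsto_const_nhds
      filter_upwards [hlq hg] with x hx
      rw [show L g x = x from hx]; simp
    exact this.limUnder_eq
  · intro T hT s hs z hz hΨ
    have hbound : ∀ j : ℕ, j * |Φ z| ≤ 4 := by
      intro j
      have e1 : ∀ᶠ x in (l : Filter ℝ), edisp L S (T ^ j) x < 3 * m x ∨
          edisp L S (T ^ j)⁻¹ x < 3 * m x := (hlb j).mono fun x hx => hx.2 j le_rfl T hT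
      have key : ∀ k : ℤ, (∀ᶠ x in (l : Filter ℝ), edisp L S (T ^ k)⁻¹ x < 3 * m x) →
          |k * Φ z| ≤ 4 := by
        intro k hk
        have t1 := (hlim' _ (hz k)).abs
        have : |Φ (T ^ k * s * (T ^ k)⁻¹)| ≤ 3 := by
          refine le_of_tendsto t1 ?_
          filter_upwards [hk, hmpos] with x hx hx0
          rw [abs_div, abs_of_pos hx0, div_le_iff₀ hx0]
          refine le_trans ?_ hx.le
          have := Finset.single_le_sum (f := fun s => |L ((T ^ k)⁻¹⁻¹ * s * (T ^ k)⁻¹) x - x|)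
            (fun _ _ => abs_nonneg _) hs
          simpa [edisp] using this
        rw [hΨ Φ hadd k] at this
        have h2 := hle s hs
        rw [abs_le] at this h2 ⊢
        constructor <;> linarith [this.1, this.2, h2.1, h2.2]
      rcases (Ultrafilter.eventually_or).1 e1 with h | h
      · have := key (-j) (by simpa using h)
        simpa [abs_mul] using this
      · have := key j (by simpa using h)
        simpa [abs_mul] using this
    by_contra hne
    have hp := abs_pos.2 hne
    obtain ⟨j, hj⟩ := exists_nat_gt (4 / |Φ z|)
    rw [div_lt_iff₀ hp] at hj
    linarith [hbound j]

end

end CircAct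

namespace CircAct
open Filter Topology

structure Sys (G : Type*) [Group G] where
  R : E4 →* G
  T : Fin 2 → F2 →* G
  rel : ∀ i u w, T i u * R w * (T i u)⁻¹ = R (phi i u w)

def sw : E4 →* E4 := FreeGroup.map Sum.swap

theorem sw_iP (u : F2) : sw (iP u) = iQ u := by
  have : sw.comp iP = iQ := by ext k; simp [sw, iP, iQ]
  exact DFunLike.congr_fun this u

theorem sw_iQ (u : F2) : sw (iQ u) = iP u := by
  have : sw.comp iQ = iP := by ext k; simp [sw, iP, iQ]
  exact DFunLike.congr_fun this u

section
variable {G : Type*} [Group G] {M : Subgroup G} {L : G → ℝ → ℝ}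

structure HG (A : Sys G) (M : Subgroup G) (KP KQ : Subgroup F2) : Prop where
  hT : ∀ i, ∀ u ∈ KP, A.T i u ∈ M
  hc : ∀ u ∈ KP, ∀ v, A.R (cc v u) ∈ M
  hQ : ∀ κ ∈ KQ, A.R (iQ κ) ∈ M

theorem coset_reps (K : Subgroup F2) [K.FiniteIndex] :
    ∃ V : Finset F2, ∀ v, ∃ κ ∈ K, ∃ w ∈ V, v = κ * w := by
  classical
  have : Fintype (F2 ⧸ K) := Fintype.ofFinite _
  refine ⟨Finset.univ.image fun q : F2 ⧸ K => (q.out)⁻¹, fun v => ?_⟩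
  obtain ⟨κ, hκ⟩ := QuotientGroup.mk_out_eq_mul K v⁻¹
  refine ⟨κ, κ.2, _, Finset.mem_image.2 ⟨(v⁻¹ : F2), Finset.mem_univ _, rfl⟩, ?_⟩
  rw [hκ]; simp

def gens [DecidableEq G] (A : Sys G) (V UP UQ : Finset F2) : Finset G :=
  (V ×ˢ UP).image (fun p => A.R (cc p.1 p.2)) ∪ UQ.image (fun κ => A.R (iQ κ))

section
variable [DecidableEq G] {A : Sys G} {V UP UQ : Finset F2} {KP KQ : Subgroup F2}

theorem gens_iQ (hUQ : Subgroup.closure (UQ : Set F2) = KQ) {κ : F2} (hκ : κ ∈ KQ) :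
    A.R (iQ κ) ∈ Subgroup.closure (gens A V UP UQ : Set G) := by
  have h : KQ ≤ (Subgroup.closure (gens A V UP UQ : Set G)).comap (A.R.comp iQ) := by
    rw [← hUQ, Subgroup.closure_le]
    intro x hx
    apply Subgroup.subset_closure
    simp only [gens, Finset.coe_union, Finset.coe_image]
    exact Or.inr ⟨x, hx, rfl⟩
  exact h hκ

theorem gens_cc (hUP : Subgroup.closure (UP : Set F2) = KP)
    (hUQ : Subgroup.closure (UQ : Set F2) = KQ) (hV : ∀ v, ∃ κ ∈ KQ, ∃ w ∈ V, v = κ * w)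
    {u : F2} (hu : u ∈ KP) (v : F2) :
    A.R (cc v u) ∈ Subgroup.closure (gens A V UP UQ : Set G) := by
  obtain ⟨κ, hκ, w, hw, rfl⟩ := hV v
  have hq := gens_iQ (A := A) (V := V) (UP := UP) hUQ hκ
  have h : KP ≤ (Subgroup.closure (gens A V UP UQ : Set G)).comap
      (A.R.comp ((MulAut.conj (iQ w)).toMonoidHom.comp iP)) := by
    rw [← hUP, Subgroup.closure_le]
    intro x hx
    apply Subgroup.subset_closure
    simp only [gens, Finset.coe_union, Finset.coe_image]
    exact Or.inl ⟨(w, x), by simpa using ⟨hw, hx⟩, by simp [cc]⟩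
  have h2 : A.R (cc w u) ∈ Subgroup.closure (gens A V UP UQ : Set G) := by
    have := h hu
    simpa [cc] using this
  rw [cc_mul_left, map_mul, map_mul, map_inv]
  exact Subgroup.mul_mem _ (Subgroup.mul_mem _ hq h2) (Subgroup.inv_mem _ hq)

theorem gens_le (hG : HG A M KP KQ) (hUP : (UP : Set F2) ⊆ KP) (hUQ : (UQ : Set F2) ⊆ KQ) :
    ∀ s ∈ gens A V UP UQ, s ∈ M := by
  intro s hs
  simp only [gens, Finset.mem_union, Finset.mem_image, Finset.mem_product] at hs
  rcases hs with ⟨p, hp, rfl⟩ | ⟨κ, hκ, rfl⟩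
  · exact hG.hc _ (hUP hp.2) _
  · exact hG.hQ _ (hUQ hκ)

/-- conjugation by the `T`'s preserves the generated group -/
theorem gens_conj (hUP : Subgroup.closure (UP : Set F2) = KP)
    (hUQ : Subgroup.closure (UQ : Set F2) = KQ) (hV : ∀ v, ∃ κ ∈ KQ, ∃ w ∈ V, v = κ * w)
    (i : Fin 2) {u : F2} (hu : u ∈ KP) :
    ∀ s ∈ gens A V UP UQ, A.T i u * s * (A.T i u)⁻¹ ∈ Subgroup.closure (gens A V UP UQ : Set G) := by
  set H := Subgroup.closure (gens A V UP UQ : Set G) with hH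
  have hcc : ∀ u ∈ KP, ∀ v, A.R (cc v u) ∈ H := fun u hu v => gens_cc hUP hUQ hV hu v
  have hz : ∀ z, A.R (zeta i u z) ∈ H := fun z => zeta_mem (H.comap A.R) i u (hcc u hu) z
  have hsub : (UP : Set F2) ⊆ KP := hUP ▸ Subgroup.subset_closure
  have hsubQ : (UQ : Set F2) ⊆ KQ := hUQ ▸ Subgroup.subset_closure
  intro s hs
  simp only [gens, Finset.mem_union, Finset.mem_image, Finset.mem_product] at hs
  rcases hs with ⟨p, hp, rfl⟩ | ⟨κ, hκ, rfl⟩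
  · rw [A.rel, phi_cc, map_mul, map_mul, map_inv]
    exact H.mul_mem (H.mul_mem (hz _) (hcc _ (hsub hp.2) _)) (H.inv_mem (hz _))
  · rw [A.rel, phi_iQ, map_mul]
    exact H.mul_mem (hz _) (gens_iQ hUQ (hsubQ hκ))

end

theorem fix_closure (hL : LineAct M L) {S : Set G} (hS : ∀ s ∈ S, s ∈ M) {x : ℝ}
    (hx : ∀ s ∈ S, L s x = x) : ∀ g ∈ Subgroup.closure S, g ∈ M ∧ L g x = x := by
  intro g hg
  induction hg using Subgroup.closure_induction with
  | mem y hy => exact ⟨hS y hy, hx y hy⟩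
  | one => exact ⟨M.one_mem, hL.one x⟩
  | mul a b _ _ ha hb =>
    exact ⟨M.mul_mem ha.1 hb.1, by rw [hL.mul _ ha.1 _ hb.1, hb.2, ha.2]⟩
  | inv a _ ha => exact ⟨M.inv_mem ha.1, hL.inv_fix ha.1 ha.2⟩

def Nset (L : G → ℝ → ℝ) (S : Finset G) (q0 : ℝ) : Set ℝ := {x | q0 ≤ x ∧ ∃ s ∈ S, L s x ≠ x}

theorem Nset_bdd (S : Finset G) (q0 : ℝ) : BddBelow (Nset L S q0) := ⟨q0, fun _ hx => hx.1⟩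

theorem le_inf {S : Finset G} {q0 : ℝ} (hne : (Nset L S q0).Nonempty) : q0 ≤ sInf (Nset L S q0) :=
  le_csInf hne fun _ hx => hx.1

theorem inf_fix (hL : LineAct M L) {S : Finset G} (hS : ∀ s ∈ S, s ∈ M) {q0 : ℝ}
    (hq0 : ∀ s ∈ S, L s q0 = q0) (hne : (Nset L S q0).Nonempty) :
    ∀ x, q0 ≤ x → x ≤ sInf (Nset L S q0) → ∀ s ∈ S, L s x = x := by
  have hlt : ∀ x, q0 ≤ x → x < sInf (Nset L S q0) → ∀ s ∈ S, L s x = x := by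
    intro x h1 h2 s hs
    by_contra hcon
    exact absurd (csInf_le (Nset_bdd S q0) ⟨h1, s, hs, hcon⟩) (not_le.2 h2)
  intro x h1 h2 s hs
  rcases h2.lt_or_eq with h | h
  · exact hlt x h1 h s hs
  · rcases h1.lt_or_eq with h3 | h3
    · have hcl : IsClosed {y | L s y = y} := isClosed_eq (hL.cont (hS s hs)) continuous_id
      have : x ∈ closure (Set.Ico q0 x) := by
        rw [closure_Ico h3.ne]; exact ⟨h1, le_rfl⟩
      exact hcl.closure_subset_iff.2 (fun y hy => hlt y hy.1 (hy.2.trans_le h2) s hs) this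
    · rw [← h3]; exact hq0 s hs

theorem inf_freq (hL : LineAct M L) {S : Finset G} (hS : ∀ s ∈ S, s ∈ M) {q0 : ℝ}
    (hq0 : ∀ s ∈ S, L s q0 = q0) (hne : (Nset L S q0).Nonempty) :
    ∃ᶠ x in 𝓝[>] (sInf (Nset L S q0)), ∃ s ∈ S, L s x ≠ x := by
  rw [frequently_iff]
  intro U hU
  obtain ⟨δ, hδ, hsub⟩ := (mem_nhdsGT_iff_exists_Ioo_subset).1 hU
  obtain ⟨x, hx, hxδ⟩ := exists_lt_of_csInf_lt hne hδ
  have hle : sInf (Nset L S q0) ≤ x := csInf_le (Nset_bdd S q0) hx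
  have hlt : sInf (Nset L S q0) < x := by
    refine lt_of_le_of_ne hle fun h => ?_
    obtain ⟨hx1, s, hs, hxs⟩ := hx
    exact hxs (inf_fix hL hS hq0 hne x hx1 h.ge s hs)
  exact ⟨x, hsub ⟨hlt, hxδ⟩, hx.2⟩

theorem inf_le_of_conj (hL : LineAct M L) {S : Finset G} (hS : ∀ s ∈ S, s ∈ M) {q0 : ℝ}
    (hne : (Nset L S q0).Nonempty) {T : G} (hT : T ∈ M)
    (hTq : L T q0 = q0) (hc : ∀ s ∈ S, T * s * T⁻¹ ∈ Subgroup.closure (S : Set G)) :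
    sInf (Nset L S q0) ≤ L T (sInf (Nset L S q0)) := by
  -- `T` maps the set into itself
  have hmap : ∀ x ∈ Nset L S q0, L T x ∈ Nset L S q0 := by
    rintro x ⟨hx, s, hs, hsx⟩
    refine ⟨?_, ?_⟩
    · have := (hL.mono T hT).monotone hx; rwa [hTq] at this
    · by_contra hcon
      push Not at hcon
      have := (fix_closure hL (S := (S : Set G)) hS hcon _ (hc s hs)).2
      rw [hL.mul _ (M.mul_mem hT (hS s hs)) _ (M.inv_mem hT), hL.mul _ hT _ (hS s hs),
        hL.inv_left hT] at this
      exact hsx ((hL.mono T hT).injective this)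
  have : L T⁻¹ (sInf (Nset L S q0)) ≤ sInf (Nset L S q0) := by
    refine le_csInf hne fun x hx => ?_
    have h1 := csInf_le (Nset_bdd S q0) (hmap x hx)
    have h2 := (hL.mono _ (M.inv_mem hT)).monotone h1
    rwa [hL.inv_left hT] at h2
  have h2 := (hL.mono _ hT).monotone this
  rwa [hL.inv_right hT] at h2

theorem inf_conj (hL : LineAct M L) {S : Finset G} (hS : ∀ s ∈ S, s ∈ M) {q0 : ℝ}
    (hne : (Nset L S q0).Nonempty) {T : G} (hT : T ∈ M)
    (hTq : L T q0 = q0) (hc : ∀ s ∈ S, T * s * T⁻¹ ∈ Subgroup.closure (S : Set G))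
    (hc' : ∀ s ∈ S, T⁻¹ * s * T⁻¹⁻¹ ∈ Subgroup.closure (S : Set G)) :
    L T (sInf (Nset L S q0)) = sInf (Nset L S q0) := by
  refine le_antisymm ?_ (inf_le_of_conj hL hS hne hT hTq hc)
  have := inf_le_of_conj hL hS hne (M.inv_mem hT) (hL.inv_fix hT hTq) hc'
  have h2 := (hL.mono _ hT).monotone this
  rwa [hL.inv_right hT] at h2

/-- stabiliser of a point -/
def stab (hL : LineAct M L) (r : ℝ) : Subgroup G where
  carrier := {g | g ∈ M ∧ L g r = r}
  one_mem' := ⟨M.one_mem, hL.one r⟩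
  mul_mem' := fun {a b} ha hb => ⟨M.mul_mem ha.1 hb.1, by rw [hL.mul _ ha.1 _ hb.1, hb.2, ha.2]⟩
  inv_mem' := fun {a} ha => ⟨M.inv_mem ha.1, hL.inv_fix ha.1 ha.2⟩

theorem log_add (hL : LineAct M L) (r : ℝ) :
    AddOn (stab hL r) (fun g => Real.log (deriv (L g) r)) := by
  rintro a ⟨ha, har⟩ b ⟨hb, hbr⟩
  have hfun : L (a * b) = L a ∘ L b := funext (hL.mul a ha b hb)
  have hd : deriv (L (a * b)) r = deriv (L a) r * deriv (L b) r := by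
    rw [hfun, deriv_comp, hbr]
    · exact (hL.strict ha _).hasDerivAt.differentiableAt
    · exact (hL.strict hb _).hasDerivAt.differentiableAt
  simp only
  rw [hd, Real.log_mul (hL.dne a ha r) (hL.dne b hb r)]

/-- kill lemma for homomorphisms defined on a group containing the `T`'s -/
theorem kill_hom {A : Sys G} {H : Subgroup G} {Φ : G → ℝ} (hΦ : AddOn H Φ) {u : F2}
    {KQ : Subgroup F2} [KQ.FiniteIndex] (hT : ∀ i, A.T i u ∈ H) (hc : ∀ v, A.R (cc v u) ∈ H)
    (hQ : ∀ κ ∈ KQ, A.R (iQ κ) ∈ H) (v : F2) : Φ (A.R (cc v u)) = 0 := by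
  refine kill (H.comap A.R) (fun w => Φ (A.R w)) (hΦ.comap A.R) u KQ hc hQ ?_ v
  intro i κ hκ
  have h1 : A.R (zeta i u κ) = (A.T i u * A.R (iQ κ) * (A.T i u)⁻¹) * (A.R (iQ κ))⁻¹ := by
    rw [A.rel, zeta, map_mul, map_inv]
  have h2 := hQ κ hκ
  rw [h1, hΦ _ (H.mul_mem (H.mul_mem (hT i) h2) (H.inv_mem (hT i))) _ (H.inv_mem h2),
    hΦ.conj (hT i) h2, hΦ.inv h2, add_neg_cancel]

theorem deriv_one (hL : LineAct M L) {A : Sys G} {KP KQ : Subgroup F2} [KQ.FiniteIndex]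
    (hG : HG A M KP KQ) {r : ℝ} {u : F2} (hu : u ∈ KP) (hT : ∀ i, L (A.T i u) r = r)
    (hc : ∀ v, L (A.R (cc v u)) r = r) (hQ : ∀ κ ∈ KQ, L (A.R (iQ κ)) r = r) (v : F2) :
    deriv (L (A.R (cc v u))) r = 1 := by
  have := kill_hom (KQ := KQ) (log_add hL r) (fun i => ⟨hG.hT i u hu, hT i⟩)
    (fun v => ⟨hG.hc u hu v, hc v⟩) (fun κ hκ => ⟨hG.hQ κ hκ, hQ κ hκ⟩) v
  exact Real.eq_one_of_pos_of_log_eq_zero (hL.dpos (hG.hc u hu v) r) this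

/-- the functional of `asymp` kills a half -/
theorem half_kill {A : Sys G} {KP KQ : Subgroup F2} [KQ.FiniteIndex]
    {UQ : Finset F2} (hUQ : Subgroup.closure (UQ : Set F2) = KQ)
    {S : Set G} {Φ : G → ℝ} (hΦ : AddOn (Subgroup.closure S) Φ) {u : F2}
    (hc : ∀ v, A.R (cc v u) ∈ Subgroup.closure S)
    (hQ : ∀ κ ∈ KQ, A.R (iQ κ) ∈ Subgroup.closure S)
    (hprop : ∀ i, ∀ κ ∈ UQ, ∀ z,
      (∀ j : ℤ, (A.T i u) ^ j * A.R (iQ κ) * ((A.T i u) ^ j)⁻¹ ∈ Subgroup.closure S) →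
        (∀ Ψ : G → ℝ, AddOn (Subgroup.closure S) Ψ → ∀ j : ℤ,
          Ψ ((A.T i u) ^ j * A.R (iQ κ) * ((A.T i u) ^ j)⁻¹) = Ψ (A.R (iQ κ)) + j * Ψ z) → Φ z = 0)
    (v : F2) : Φ (A.R (cc v u)) = 0 := by
  set H := Subgroup.closure S
  have hccj : ∀ (j : ℤ) v, A.R (cc v (u ^ j)) ∈ H := by
    intro j v
    have : cc v (u ^ j) = (cc v u) ^ j := by simp [cc]
    rw [this, map_zpow]; exact H.zpow_mem (hc v) j
  refine kill (H.comap A.R) (fun w => Φ (A.R w)) (hΦ.comap A.R) u KQ hc hQ ?_ v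
  intro i
  rw [← hUQ]
  refine zeta_gen (H.comap A.R) (fun w => Φ (A.R w)) (hΦ.comap A.R) u i UQ hc
    (fun κ hκ => hQ κ (hUQ ▸ hκ)) ?_
  intro κ hκ
  have hκ' : κ ∈ KQ := hUQ ▸ Subgroup.subset_closure hκ
  have hconj : ∀ j : ℤ, (A.T i u) ^ j * A.R (iQ κ) * ((A.T i u) ^ j)⁻¹ =
      A.R (zeta i (u ^ j) κ) * A.R (iQ κ) := by
    intro j
    rw [← map_zpow, A.rel, phi_iQ, map_mul]
  have hzm : ∀ j : ℤ, A.R (zeta i (u ^ j) κ) ∈ H := fun j =>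
    zeta_mem (H.comap A.R) i (u ^ j) (hccj j) κ
  refine hprop i κ hκ _ (fun j => ?_) (fun Ψ hΨ j => ?_)
  · rw [hconj]; exact H.mul_mem (hzm j) (hQ κ hκ')
  · rw [hconj, hΨ _ (hzm j) _ (hQ κ hκ')]
    have := zeta_zpow (H.comap A.R) (fun w => Ψ (A.R w)) (hΨ.comap A.R) u i hc j κ
    rw [this, add_comm]

end

end CircAct

namespace CircAct
open Filter Topology

section
variable {G : Type*} [Group G] {M : Subgroup G} {L : G → ℝ → ℝ}

def tset [DecidableEq G] (A : Sys G) (UP : Finset F2) : Finset G :=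
  (Finset.univ ×ˢ UP).image fun p : Fin 2 × F2 => A.T p.1 p.2

theorem deriv_one_of_triv (hL : LineAct M L) {g : G} (hg : g ∈ M) {r : ℝ} (hr : L g r = r)
    (h : ∀ᶠ x in 𝓝[>] r, L g x = x) : deriv (L g) r = 1 := by
  have h1 : HasDerivWithinAt (L g) (deriv (L g) r) (Set.Ioi r) r :=
    (hL.strict hg r).hasDerivAt.hasDerivWithinAt
  have h2 : HasDerivWithinAt (L g) 1 (Set.Ioi r) r :=
    (hasDerivWithinAt_id r _).congr_of_eventuallyEq h hr
  exact (uniqueDiffWithinAt_Ioi r).eq_deriv _ h1 h2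

theorem line_contra_aux [DecidableEq G] (hL : LineAct M L) {q0 : ℝ} (hq0 : ∀ g ∈ M, L g q0 = q0)
    {A A' : Sys G} (hsw : ∀ w, A'.R w = A.R (sw w)) {KP KQ : Subgroup F2} [KP.FiniteIndex]
    [KQ.FiniteIndex] (hG : HG A M KP KQ) (hG' : HG A' M KQ KP) {V V' UP UQ : Finset F2}
    (hUP : Subgroup.closure (UP : Set F2) = KP) (hUQ : Subgroup.closure (UQ : Set F2) = KQ)
    (hV : ∀ v, ∃ κ ∈ KQ, ∃ w ∈ V, v = κ * w) (hV' : ∀ v, ∃ κ ∈ KP, ∃ w ∈ V', v = κ * w)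
    (hne : (Nset L (gens A V UP UQ) q0).Nonempty)
    (hne' : (Nset L (gens A' V' UQ UP) q0).Nonempty)
    (hle : sInf (Nset L (gens A V UP UQ) q0) ≤ sInf (Nset L (gens A' V' UQ UP) q0)) : False := by
  set S := gens A V UP UQ with hSdef
  set S' := gens A' V' UQ UP with hSdef'
  have hUP' : (UP : Set F2) ⊆ KP := hUP ▸ Subgroup.subset_closure
  have hUQ' : (UQ : Set F2) ⊆ KQ := hUQ ▸ Subgroup.subset_closure
  have hSM : ∀ s ∈ S, s ∈ M := gens_le hG hUP' hUQ'
  have hSM' : ∀ s ∈ S', s ∈ M := gens_le hG' hUQ' hUP'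
  have hQeq : ∀ κ, A.R (iQ κ) = A'.R (cc 1 κ) := by
    intro κ; rw [hsw]; simp [cc, sw_iP]
  have hPeq : ∀ κ, A'.R (iQ κ) = A.R (cc 1 κ) := by
    intro κ; rw [hsw, sw_iQ]; simp [cc]
  set r := sInf (Nset L S q0) with hr
  have hqr : q0 ≤ r := le_inf hne
  have fixS0 : ∀ s ∈ S, L s r = r :=
    inf_fix hL hSM (fun s hs => hq0 s (hSM s hs)) hne r hqr le_rfl
  have fixS0' : ∀ s ∈ S', L s r = r :=
    inf_fix hL hSM' (fun s hs => hq0 s (hSM' s hs)) hne' r hqr hle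
  have fixS := fix_closure hL (S := (S : Set G)) hSM fixS0
  have fixS' := fix_closure hL (S := (S' : Set G)) hSM' fixS0'
  have memc : ∀ u ∈ KP, ∀ v, A.R (cc v u) ∈ Subgroup.closure (S : Set G) :=
    fun u hu v => gens_cc hUP hUQ hV hu v
  have memq : ∀ κ ∈ KQ, A.R (iQ κ) ∈ Subgroup.closure (S : Set G) :=
    fun κ hκ => gens_iQ hUQ hκ
  have memc' : ∀ u ∈ KQ, ∀ v, A'.R (cc v u) ∈ Subgroup.closure (S' : Set G) :=
    fun u hu v => gens_cc hUQ hUP hV' hu v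
  have memq' : ∀ κ ∈ KP, A'.R (iQ κ) ∈ Subgroup.closure (S' : Set G) :=
    fun κ hκ => gens_iQ hUP hκ
  have fixT : ∀ i, ∀ u ∈ KP, L (A.T i u) r = r := by
    intro i u hu
    refine inf_conj hL hSM hne (hG.hT i u hu) (hq0 _ (hG.hT i u hu))
      (gens_conj hUP hUQ hV i hu) ?_
    rw [← map_inv]
    exact gens_conj hUP hUQ hV i (KP.inv_mem hu)
  have dP : ∀ u ∈ KP, ∀ v, deriv (L (A.R (cc v u))) r = 1 := fun u hu v =>
    deriv_one hL hG hu (fun i => fixT i u hu) (fun v => (fixS _ (memc u hu v)).2)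
      (fun κ hκ => (fixS _ (memq κ hκ)).2) v
  have hmove : ∃ᶠ x in 𝓝[>] r, ∃ s ∈ S, L s x ≠ x :=
    inf_freq hL hSM (fun s hs => hq0 s (hSM s hs)) hne
  have hF : ∀ g ∈ tset A UP, g ∈ M ∧ L g r = r := by
    intro g hg
    simp only [tset, Finset.mem_image, Finset.mem_product] at hg
    obtain ⟨p, hp, rfl⟩ := hg
    exact ⟨hG.hT _ _ (hUP' hp.2), fixT _ _ (hUP' hp.2)⟩
  have htm : ∀ i, ∀ u ∈ UP, A.T i u ∈ tset A UP := by
    intro i u hu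
    exact Finset.mem_image.2 ⟨(i, u), by simpa using hu, rfl⟩
  have hsm : ∀ κ ∈ UQ, A.R (iQ κ) ∈ S := by
    intro κ hκ
    exact Finset.mem_union_right _ (Finset.mem_image_of_mem _ hκ)
  rcases hle.lt_or_eq with hlt | heq
  · have triv : ∀ κ ∈ KQ, ∀ᶠ x in 𝓝[>] r, L (A.R (iQ κ)) x = x := by
      intro κ hκ
      filter_upwards [Ioo_mem_nhdsGT hlt] with x hx
      rw [hQeq]
      exact (fix_closure hL (S := (S' : Set G)) hSM'
        (inf_fix hL hSM' (fun s hs => hq0 s (hSM' s hs)) hne' x (hqr.trans hx.1.le) hx.2.le)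
        _ (memc' κ hκ 1)).2
    obtain ⟨Φ, hadd, ⟨s, hs, hne0⟩, htriv, hprop⟩ := asymp hL r S (tset A UP) (by
      intro s hs
      refine ⟨hSM s hs, fixS0 s hs, ?_⟩
      simp only [hSdef, gens, Finset.mem_union, Finset.mem_image, Finset.mem_product] at hs
      rcases hs with ⟨p, hp, rfl⟩ | ⟨κ, hκ, rfl⟩
      · exact dP _ (hUP' hp.2) _
      · exact deriv_one_of_triv hL (hG.hQ _ (hUQ' hκ)) (fixS _ (memq _ (hUQ' hκ))).2
          (triv κ (hUQ' hκ))) hF hmove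
    simp only [hSdef, gens, Finset.mem_union, Finset.mem_image, Finset.mem_product] at hs
    rcases hs with ⟨p, hp, rfl⟩ | ⟨κ, hκ, rfl⟩
    · exact hne0 (half_kill (KP := KP) hUQ hadd (memc _ (hUP' hp.2)) memq
        (fun i κ hκ z h1 h2 => hprop _ (htm i _ hp.2) _ (hsm κ hκ) z h1 h2) _)
    · exact hne0 (htriv _ (triv κ (hUQ' hκ)))
  · have fixT' : ∀ i, ∀ u ∈ KQ, L (A'.T i u) r = r := by
      intro i u hu
      rw [heq]
      refine inf_conj hL hSM' hne' (hG'.hT i u hu) (hq0 _ (hG'.hT i u hu))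
        (gens_conj hUQ hUP hV' i hu) ?_
      rw [← map_inv]
      exact gens_conj hUQ hUP hV' i (KQ.inv_mem hu)
    have dQ : ∀ u ∈ KQ, ∀ v, deriv (L (A'.R (cc v u))) r = 1 := fun u hu v =>
      deriv_one hL hG' hu (fun i => fixT' i u hu) (fun v => (fixS' _ (memc' u hu v)).2)
        (fun κ hκ => (fixS' _ (memq' κ hκ)).2) v
    have hF' : ∀ g ∈ tset A' UQ, g ∈ M ∧ L g r = r := by
      intro g hg
      simp only [tset, Finset.mem_image, Finset.mem_product] at hg
      obtain ⟨p, hp, rfl⟩ := hg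
      exact ⟨hG'.hT _ _ (hUQ' hp.2), fixT' _ _ (hUQ' hp.2)⟩
    have htm' : ∀ i, ∀ u ∈ UQ, A'.T i u ∈ tset A' UQ := by
      intro i u hu
      exact Finset.mem_image.2 ⟨(i, u), by simpa using hu, rfl⟩
    have hsm' : ∀ κ ∈ UP, A'.R (iQ κ) ∈ S' := by
      intro κ hκ
      exact Finset.mem_union_right _ (Finset.mem_image_of_mem _ hκ)
    have hcases : ∀ s ∈ S ∪ S', (∃ u ∈ UP, ∃ v, s = A.R (cc v u)) ∨
        (∃ u ∈ UQ, ∃ v, s = A'.R (cc v u)) := by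
      intro s hs
      simp only [hSdef, hSdef', gens, Finset.mem_union, Finset.mem_image, Finset.mem_product] at hs
      rcases hs with (⟨p, hp, rfl⟩ | ⟨κ, hκ, rfl⟩) | (⟨p, hp, rfl⟩ | ⟨κ, hκ, rfl⟩)
      · exact Or.inl ⟨_, hp.2, _, rfl⟩
      · exact Or.inr ⟨_, hκ, 1, hQeq κ⟩
      · exact Or.inr ⟨_, hp.2, _, rfl⟩
      · exact Or.inl ⟨_, hκ, 1, hPeq κ⟩
    have hl1 : Subgroup.closure (S : Set G) ≤ Subgroup.closure ((S ∪ S' : Finset G) : Set G) :=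
      Subgroup.closure_mono (by simp)
    have hl2 : Subgroup.closure (S' : Set G) ≤ Subgroup.closure ((S ∪ S' : Finset G) : Set G) :=
      Subgroup.closure_mono (by simp)
    obtain ⟨Φ, hadd, ⟨s, hs, hne0⟩, -, hprop⟩ := asymp hL r (S ∪ S') (tset A UP ∪ tset A' UQ) (by
      intro s hs
      refine ⟨?_, ?_, ?_⟩
      · rcases Finset.mem_union.1 hs with h | h
        · exact hSM s h
        · exact hSM' s h
      · rcases Finset.mem_union.1 hs with h | h
        · exact fixS0 s h
        · exact fixS0' s h
      · rcases hcases s hs with ⟨u, hu, v, rfl⟩ | ⟨u, hu, v, rfl⟩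
        · exact dP u (hUP' hu) v
        · exact dQ u (hUQ' hu) v)
      (by
        intro g hg
        rcases Finset.mem_union.1 hg with h | h
        · exact hF g h
        · exact hF' g h)
      (hmove.mono fun x hx => by
        obtain ⟨s, hs, h⟩ := hx
        exact ⟨s, Finset.mem_union_left _ hs, h⟩)
    rcases hcases s hs with ⟨u, hu, v, rfl⟩ | ⟨u, hu, v, rfl⟩
    · exact hne0 (half_kill (KP := KP) hUQ hadd (fun v => hl1 (memc _ (hUP' hu) v))
        (fun κ hκ => hl1 (memq κ hκ))
        (fun i κ hκ z h1 h2 => hprop _ (Finset.mem_union_left _ (htm i _ hu)) _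
          (Finset.mem_union_left _ (hsm κ hκ)) z h1 h2) _)
    · exact hne0 (half_kill (KP := KQ) hUP hadd (fun v => hl2 (memc' _ (hUQ' hu) v))
        (fun κ hκ => hl2 (memq' κ hκ))
        (fun i κ hκ z h1 h2 => hprop _ (Finset.mem_union_right _ (htm' i _ hu)) _
          (Finset.mem_union_right _ (hsm' κ hκ)) z h1 h2) _)

theorem gens_ne [DecidableEq G] (hL : LineAct M L) {q0 : ℝ}
    (hper : ∀ g ∈ M, ∀ x, L g (x + 1) = L g x + 1)
    (hfaith : ∀ g ∈ M, (∀ x, L g x = x) → g = 1)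
    {A : Sys G} (hinj : Function.Injective A.R) {KP KQ : Subgroup F2} [KQ.FiniteIndex]
    (hG : HG A M KP KQ) {V UP UQ : Finset F2}
    (hUP : Subgroup.closure (UP : Set F2) = KP) (hUQ : Subgroup.closure (UQ : Set F2) = KQ) :
    (Nset L (gens A V UP UQ) q0).Nonempty := by
  have hUP' : (UP : Set F2) ⊆ KP := hUP ▸ Subgroup.subset_closure
  have hUQ' : (UQ : Set F2) ⊆ KQ := hUQ ▸ Subgroup.subset_closure
  have hSM : ∀ s ∈ gens A V UP UQ, s ∈ M := gens_le hG hUP' hUQ'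
  by_contra hcon
  rw [Set.not_nonempty_iff_eq_empty] at hcon
  have hfix : ∀ x, q0 ≤ x → ∀ s ∈ gens A V UP UQ, L s x = x := by
    intro x hx s hs
    by_contra h
    have : x ∈ Nset L (gens A V UP UQ) q0 := ⟨hx, s, hs, h⟩
    rw [hcon] at this; exact this
  have htriv : ∀ κ ∈ KQ, A.R (iQ κ) = 1 := by
    intro κ hκ
    have hm := hG.hQ κ hκ
    refine hfaith _ hm fun x => ?_
    have hper' : ∀ k : ℕ, L (A.R (iQ κ)) (x + k) = L (A.R (iQ κ)) x + k := by
      intro k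
      induction k with
      | zero => simp
      | succ k ih => push_cast; rw [← add_assoc, hper _ hm, ih, add_assoc]
    obtain ⟨k, hk⟩ := exists_nat_gt (q0 - x)
    have h1 := (fix_closure hL (S := (gens A V UP UQ : Set G)) hSM
      (hfix (x + k) (by linarith)) _ (gens_iQ hUQ hκ)).2
    rw [hper'] at h1
    linarith
  obtain ⟨k, hk0, hk⟩ := Subgroup.exists_pow_mem_of_index_ne_zero
    (Subgroup.FiniteIndex.index_ne_zero (H := KQ)) (FreeGroup.of (0 : Fin 2))
  have h1 := htriv _ hk.2
  rw [← map_one A.R] at h1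
  have h2 := hinj h1
  have h3 : Function.Injective iQ := FreeGroup.map_injective Sum.inr_injective
  rw [← map_one iQ] at h2
  have h4 := h3 h2
  have h5 := congrArg (FreeGroup.lift (fun _ : Fin 2 => Multiplicative.ofAdd (1:ℤ))) h4
  simp [← ofAdd_nsmul] at h5
  omega

theorem line_contra (hL : LineAct M L) {q0 : ℝ} (hq0 : ∀ g ∈ M, L g q0 = q0)
    (hper : ∀ g ∈ M, ∀ x, L g (x + 1) = L g x + 1)
    (hfaith : ∀ g ∈ M, (∀ x, L g x = x) → g = 1)
    {A A' : Sys G} (hsw : ∀ w, A'.R w = A.R (sw w)) (hinj : Function.Injective A.R)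
    {KP KQ : Subgroup F2} [KP.FiniteIndex]
    [KQ.FiniteIndex] (hG : HG A M KP KQ) (hG' : HG A' M KQ KP) : False := by
  classical
  have hsw' : ∀ w, A.R w = A'.R (sw w) := by
    intro w
    rw [hsw]
    congr 1
    have : sw.comp sw = MonoidHom.id E4 := by
      ext k; rcases k with k | k <;> simp [sw]
    exact (DFunLike.congr_fun this w).symm
  have hinj' : Function.Injective A'.R := by
    intro a b hab
    rw [hsw, hsw] at hab
    exact FreeGroup.map_injective (Sum.swap_leftInverse.injective) (hinj hab)
  obtain ⟨V, hV⟩ := coset_reps KQ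
  obtain ⟨V', hV'⟩ := coset_reps KP
  obtain ⟨UP, hUP⟩ := (Group.fg_iff_subgroup_fg KP).1 inferInstance
  obtain ⟨UQ, hUQ⟩ := (Group.fg_iff_subgroup_fg KQ).1 inferInstance
  have hne := gens_ne (V := V) (q0 := q0) hL hper hfaith hinj hG hUP hUQ
  have hne' := gens_ne (V := V') (q0 := q0) hL hper hfaith hinj' hG' hUQ hUP
  rcases le_total (sInf (Nset L (gens A V UP UQ) q0)) (sInf (Nset L (gens A' V' UQ UP) q0)) with h | h
  · exact line_contra_aux hL hq0 hsw hG hG' hUP hUQ hV hV' hne hne' h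
  · exact line_contra_aux hL hq0 hsw' hG' hG hUQ hUP hV' hV hne' hne h

end

end CircAct

namespace CircAct
open Filter Topology

/-- invertible lifts of degree one circle maps -/
abbrev CU : Type := CircleDeg1Liftˣ

theorem cu_mul (f g : CU) (x : ℝ) : (f * g) x = f (g x) := rfl
theorem cu_one (x : ℝ) : (1 : CU) x = x := rfl
theorem cu_smono (f : CU) : StrictMono f := (CircleDeg1Lift.toOrderIso f).strictMono
theorem cu_cont (f : CU) : Continuous f := (CircleDeg1Lift.toOrderIso f).continuous
theorem cu_inv_fix (f : CU) {x : ℝ} (h : f x = x) : f⁻¹ x = x := by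
  conv_lhs => rw [← h]
  exact CircleDeg1Lift.units_inv_apply_apply f x

def cfix (f : CU) : Set ℝ := {x | f x = x}

theorem cfix_closed (f : CU) : IsClosed (cfix f) := isClosed_eq (cu_cont f) continuous_id

theorem cfix_per (f : CU) {x : ℝ} (hx : x ∈ cfix f) (k : ℤ) : x + k ∈ cfix f := by
  have : f x = x := hx
  change f (x + k) = x + k
  rw [CircleDeg1Lift.map_add_int, this]

theorem cfix_comm {f g : CU} (h : Commute f g) {x : ℝ} (hx : x ∈ cfix g) : f x ∈ cfix g := by
  have h1 : g x = x := hx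
  change g (f x) = f x
  rw [← cu_mul, ← h.eq, cu_mul, h1]

theorem fix_inf (f : CU) {A : Set ℝ} (hA : IsClosed A) (h1 : ∀ x ∈ A, f x ∈ A)
    (h2 : ∀ x ∈ A, f⁻¹ x ∈ A) {x : ℝ} (hx : f x = x) (hne : (A ∩ Set.Ici x).Nonempty) :
    ∃ y ∈ A, x ≤ y ∧ f y = y ∧ ∀ z ∈ A, x ≤ z → y ≤ z := by
  have hb : BddBelow (A ∩ Set.Ici x) := ⟨x, fun y hy => hy.2⟩
  have hm := (hA.inter isClosed_Ici).csInf_mem hne hb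
  set y := sInf (A ∩ Set.Ici x)
  refine ⟨y, hm.1, hm.2, ?_, fun z hz hxz => csInf_le hb ⟨hz, hxz⟩⟩
  have a1 : y ≤ f y := csInf_le hb ⟨h1 y hm.1, by
    have := (cu_smono f).monotone hm.2; rwa [hx] at this⟩
  have a2 : y ≤ f⁻¹ y := csInf_le hb ⟨h2 y hm.1, by
    have := (cu_smono f⁻¹).monotone hm.2; rwa [cu_inv_fix f hx] at this⟩
  have a3 := (cu_smono f).monotone a2
  rw [CircleDeg1Lift.units_apply_inv_apply] at a3
  exact le_antisymm a3 a1

theorem fix_sup (f : CU) {A : Set ℝ} (hA : IsClosed A) (h1 : ∀ x ∈ A, f x ∈ A)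
    (h2 : ∀ x ∈ A, f⁻¹ x ∈ A) {x : ℝ} (hx : f x = x) (hne : (A ∩ Set.Iic x).Nonempty) :
    ∃ y ∈ A, y ≤ x ∧ f y = y ∧ ∀ z ∈ A, z ≤ x → z ≤ y := by
  have hb : BddAbove (A ∩ Set.Iic x) := ⟨x, fun y hy => hy.2⟩
  have hm := (hA.inter isClosed_Iic).csSup_mem hne hb
  set y := sSup (A ∩ Set.Iic x)
  refine ⟨y, hm.1, hm.2, ?_, fun z hz hxz => le_csSup hb ⟨hz, hxz⟩⟩
  have a1 : f y ≤ y := le_csSup hb ⟨h1 y hm.1, by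
    have := (cu_smono f).monotone hm.2; rwa [hx] at this⟩
  have a2 : f⁻¹ y ≤ y := le_csSup hb ⟨h2 y hm.1, by
    have := (cu_smono f⁻¹).monotone hm.2; rwa [cu_inv_fix f hx] at this⟩
  have a3 := (cu_smono f).monotone a2
  rw [CircleDeg1Lift.units_apply_inv_apply] at a3
  exact le_antisymm a1 a3

theorem per_ge {A : Set ℝ} (hper : ∀ x ∈ A, ∀ k : ℤ, x + k ∈ A) (hne : A.Nonempty) (x : ℝ) :
    (A ∩ Set.Ici x).Nonempty := by
  obtain ⟨a, ha⟩ := hne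
  refine ⟨a + ⌈x - a⌉, hper a ha _, ?_⟩
  have := Int.le_ceil (x - a)
  simp only [Set.mem_Ici]; linarith

theorem per_le {A : Set ℝ} (hper : ∀ x ∈ A, ∀ k : ℤ, x + k ∈ A) (hne : A.Nonempty) (x : ℝ) :
    (A ∩ Set.Iic x).Nonempty := by
  obtain ⟨a, ha⟩ := hne
  refine ⟨a + ⌊x - a⌋, hper a ha _, ?_⟩
  have := Int.floor_le (x - a)
  simp only [Set.mem_Iic]; linarith

theorem two_sets {C D : Set ℝ} (hC : IsClosed C) (hD : IsClosed D)
    (hCp : ∀ x ∈ C, ∀ k : ℤ, x + k ∈ C) (hDp : ∀ x ∈ D, ∀ k : ℤ, x + k ∈ D)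
    (hCn : C.Nonempty) (hDn : D.Nonempty) (hdis : ∀ x ∈ C, x ∉ D) :
    ∃ q, ∀ f : CU, (∀ x ∈ C, f x ∈ C) → (∀ x ∈ C, f⁻¹ x ∈ C) → (∀ x ∈ D, f x ∈ D) →
      (∀ x ∈ D, f⁻¹ x ∈ D) → (∃ x, f x = x) → f q = q := by
  obtain ⟨d, hd⟩ := hDn
  obtain ⟨q, hqC, hqd, -, hqmax⟩ := fix_sup 1 hC (fun x hx => hx) (fun x hx => by simpa using hx)
    (cu_one d) (per_le hCp hCn d)
  refine ⟨q, fun f c1 c2 d1 d2 ⟨x, hx⟩ => ?_⟩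
  obtain ⟨p, hpf, hpq, -, hpmax⟩ := fix_sup 1 (cfix_closed f) (fun x hx => hx)
    (fun x hx => by simpa using hx) (cu_one q) (per_le (fun x hx k => cfix_per f hx k) ⟨x, hx⟩ q)
  have hpf' : f p = p := hpf
  obtain ⟨y, hyD, hpy, hyf, hymin⟩ := fix_inf f hD d1 d2 hpf' (per_ge hDp ⟨d, hd⟩ p)
  rcases le_or_gt y q with h | h
  · have : y = p := le_antisymm (hpmax y hyf h) hpy
    subst this
    obtain ⟨c, hcC, hpc, hcf, hcmin⟩ := fix_inf f hC c1 c2 hpf' (per_ge hCp hCn y)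
    have : c = y := le_antisymm (hpmax c hcf (hcmin q hqC hpq)) hpc
    subst this
    exact absurd hyD (hdis c hcC)
  · obtain ⟨e, heC, hey, hef, hemax⟩ := fix_sup f hC c1 c2 hyf (per_le hCp hCn y)
    have h1 : q ≤ e := hemax q hqC h.le
    have h2 : e ≤ q := hqmax e heC (hey.trans (hymin d hd (hpq.trans hqd)))
    rw [← le_antisymm h2 h1]; exact hef

/-- the alternative for commuting groups -/
theorem commuting_alt (D1 D2 : Subgroup CU) (hcomm : ∀ a ∈ D1, ∀ b ∈ D2, Commute a b) :
    (∃ q, ∀ f ∈ D1, (∃ x, f x = x) → f q = q) ∨ (∃ q, ∀ f ∈ D2, (∃ x, f x = x) → f q = q) := by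
  classical
  by_cases h2 : ∃ q, ∀ f ∈ D2, (∃ x, f x = x) → f q = q
  · exact Or.inr h2
  left
  let I := {f : CU // f ∈ D2 ∧ (cfix f).Nonempty}
  by_cases hcl : ∃ (t : Finset I) (b : I), (⋂ i ∈ t, cfix i.1).Nonempty ∧
      ∀ x ∈ ⋂ i ∈ t, cfix i.1, x ∉ cfix b.1
  · obtain ⟨t, b, hne, hdis⟩ := hcl
    obtain ⟨q, hq⟩ := two_sets (C := ⋂ i ∈ t, cfix i.1) (D := cfix b.1)
      (isClosed_biInter fun i _ => cfix_closed i.1) (cfix_closed b.1)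
      (fun x hx k => by
        simp only [Set.mem_iInter] at hx ⊢
        exact fun i hi => cfix_per i.1 (hx i hi) k)
      (fun x hx k => cfix_per b.1 hx k) hne b.2.2 hdis
    refine ⟨q, fun f hf hfx => hq f ?_ ?_ ?_ ?_ hfx⟩
    · intro x hx
      simp only [Set.mem_iInter] at hx ⊢
      exact fun i hi => cfix_comm (hcomm f hf i.1 i.2.1) (hx i hi)
    · intro x hx
      simp only [Set.mem_iInter] at hx ⊢
      exact fun i hi => cfix_comm (hcomm f⁻¹ (D1.inv_mem hf) i.1 i.2.1) (hx i hi)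
    · exact fun x hx => cfix_comm (hcomm f hf b.1 b.2.1) hx
    · exact fun x hx => cfix_comm (hcomm f⁻¹ (D1.inv_mem hf) b.1 b.2.1) hx
  · exfalso
    push Not at hcl
    have hfin : ∀ t : Finset I, (⋂ i ∈ t, cfix i.1).Nonempty := by
      intro t
      induction t using Finset.induction_on with
      | empty => simp
      | insert a t _ ih =>
        obtain ⟨x, hx, hxa⟩ := hcl t a ih
        refine ⟨x, ?_⟩
        simp only [Set.mem_iInter, Finset.mem_insert] at hx ⊢
        rintro i (rfl | hi)
        · exact hxa
        · exact hx i hi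
    have hK := (isCompact_Icc (a := (0:ℝ)) (b := 1)).inter_iInter_nonempty
      (fun i : I => cfix i.1) (fun i => cfix_closed i.1) (fun t => by
        obtain ⟨x, hx⟩ := hfin t
        refine ⟨x + (-⌊x⌋ : ℤ), ?_, ?_⟩
        · have h1 := Int.floor_le x
          have h2 := Int.lt_floor_add_one x
          push_cast
          constructor <;> linarith
        · simp only [Set.mem_iInter] at hx ⊢
          exact fun i hi => cfix_per i.1 (hx i hi) _)
    obtain ⟨q, -, hq⟩ := hK
    apply h2
    refine ⟨q, fun f hf hfx => ?_⟩
    simp only [Set.mem_iInter] at hq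
    exact hq ⟨f, hf, hfx⟩

local notation "τ" => CircleDeg1Lift.translationNumber

theorem cu_tau_pow (f : CU) (m : ℕ) : τ ((f ^ m : CU) : CircleDeg1Lift) = m * τ (f : CircleDeg1Lift) := by
  rw [Units.val_pow_eq_pow_val, CircleDeg1Lift.translationNumber_pow]

theorem cu_upper (f : CU) (m : ℕ) (x : ℝ) : (f ^ m) x ≤ x + m * τ (f : CircleDeg1Lift) + 1 := by
  have := CircleDeg1Lift.map_lt_add_translationNumber_add_one ((f ^ m : CU) : CircleDeg1Lift) x
  rw [cu_tau_pow] at this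
  exact this.le

theorem cu_lower (f : CU) (m : ℕ) (x : ℝ) : x + m * τ (f : CircleDeg1Lift) - 1 ≤ (f ^ m) x := by
  have := cu_upper f⁻¹ m ((f ^ m) x)
  rw [CircleDeg1Lift.translationNumber_units_inv, inv_pow, CircleDeg1Lift.units_inv_apply_apply] at this
  linarith

theorem le_of_nat_mul {a b c : ℝ} (h : ∀ m : ℕ, m * a ≤ m * b + c) : a ≤ b := by
  by_contra hcon
  push Not at hcon
  obtain ⟨m, hm⟩ := exists_nat_gt (c / (a - b))
  have hp : 0 < a - b := sub_pos.2 hcon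
  rw [div_lt_iff₀ hp] at hm
  nlinarith [h m]

theorem tau_add_aux (O : Set ℝ) (q : ℝ) (hqO : q ∈ O) (f g : CU) (hf : ∀ x ∈ O, f x ∈ O)
    (hg : ∀ x ∈ O, g x ∈ O) (hle : ∀ x ∈ O, g (f x) ≤ f (g x)) :
    τ ((f * g : CU) : CircleDeg1Lift) = τ (f : CircleDeg1Lift) + τ (g : CircleDeg1Lift) := by
  have hfm : ∀ (m : ℕ), ∀ x ∈ O, (f ^ m) x ∈ O := by
    intro m
    induction m with
    | zero => intro x hx; simpa using hx
    | succ m ih => intro x hx; rw [pow_succ', cu_mul]; exact hf _ (ih x hx)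
  have hgm : ∀ (m : ℕ), ∀ x ∈ O, (g ^ m) x ∈ O := by
    intro m
    induction m with
    | zero => intro x hx; simpa using hx
    | succ m ih => intro x hx; rw [pow_succ', cu_mul]; exact hg _ (ih x hx)
  have h1 : ∀ (m : ℕ), ∀ x ∈ O, g ((f ^ m) x) ≤ (f ^ m) (g x) := by
    intro m
    induction m with
    | zero => intro x hx; simp
    | succ m ih =>
      intro x hx
      rw [pow_succ', cu_mul, cu_mul]
      exact (hle _ (hfm m x hx)).trans ((cu_smono f).monotone (ih x hx))
  have h2 : ∀ (m : ℕ), ∀ x ∈ O, (g ^ m) (f x) ≤ f ((g ^ m) x) := by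
    intro m
    induction m with
    | zero => intro x hx; simp
    | succ m ih =>
      intro x hx
      rw [pow_succ', cu_mul, cu_mul]
      exact ((cu_smono g).monotone (ih x hx)).trans (hle _ (hgm m x hx))
  have up : ∀ (m : ℕ), ((f * g) ^ m) q ≤ (f ^ m) ((g ^ m) q) := by
    intro m
    induction m with
    | zero => simp
    | succ m ih =>
      rw [pow_succ', cu_mul, cu_mul, pow_succ' f, cu_mul, pow_succ' g, cu_mul]
      refine (cu_smono f).monotone (((cu_smono g).monotone ih).trans ?_)
      exact h1 m _ (hgm m q hqO)
  have lo : ∀ (m : ℕ), (g ^ m) ((f ^ m) q) ≤ ((f * g) ^ m) q := by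
    intro m
    induction m with
    | zero => simp
    | succ m ih =>
      rw [pow_succ' (f * g), cu_mul, cu_mul, pow_succ' f, cu_mul]
      refine (h2 (m+1) _ (hfm m q hqO)).trans ((cu_smono f).monotone ?_)
      rw [pow_succ', cu_mul]
      exact (cu_smono g).monotone ih
  apply le_antisymm
  · refine le_of_nat_mul (c := 3) fun m => ?_
    have a1 := cu_lower (f * g) m q
    have a2 := cu_upper f m ((g ^ m) q)
    have a3 := cu_upper g m q
    have a4 := up m
    linarith
  · refine le_of_nat_mul (c := 3) fun m => ?_
    have a1 := cu_upper (f * g) m q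
    have a2 := cu_lower g m ((f ^ m) q)
    have a3 := cu_lower f m q
    have a4 := lo m
    linarith

theorem tau_add (D : Subgroup CU) (q : ℝ) (hq : ∀ f ∈ D, (∃ x, f x = x) → f q = q)
    (f g : CU) (hf : f ∈ D) (hg : g ∈ D) :
    τ ((f * g : CU) : CircleDeg1Lift) = τ (f : CircleDeg1Lift) + τ (g : CircleDeg1Lift) := by
  set O : Set ℝ := {x | ∃ h ∈ D, x = h q} with hO
  have hqO : q ∈ O := ⟨1, D.one_mem, rfl⟩
  have hOinv : ∀ h ∈ D, ∀ x ∈ O, h x ∈ O := by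
    rintro h hh _ ⟨k, hk, rfl⟩
    exact ⟨h * k, D.mul_mem hh hk, rfl⟩
  have hOfix : ∀ k ∈ D, (∃ x, k x = x) → ∀ x ∈ O, k x = x := by
    rintro k hk ⟨y, hy⟩ _ ⟨h, hh, rfl⟩
    have := hq (h⁻¹ * k * h) (D.mul_mem (D.mul_mem (D.inv_mem hh) hk) hh) ⟨h⁻¹ y, by
      rw [cu_mul, cu_mul, CircleDeg1Lift.units_apply_inv_apply, hy]⟩
    rw [cu_mul, cu_mul] at this
    have h2 := congrArg h this
    rwa [CircleDeg1Lift.units_apply_inv_apply] at h2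
  have halt : (∀ x ∈ O, g (f x) ≤ f (g x)) ∨ (∀ x ∈ O, f (g x) ≤ g (f x)) := by
    by_contra hcon
    push Not at hcon
    obtain ⟨⟨a, ha, ha'⟩, ⟨b, hb, hb'⟩⟩ := hcon
    have hex : ∃ x, f (g x) = g (f x) := by
      have hcont : Continuous fun x => f (g x) - g (f x) :=
        ((cu_cont f).comp (cu_cont g)).sub ((cu_cont g).comp (cu_cont f))
      have := mem_range_of_exists_le_of_exists_ge (c := 0) hcont ⟨a, by linarith⟩ ⟨b, by linarith⟩
      obtain ⟨x, hx⟩ := this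
      exact ⟨x, by linarith⟩
    obtain ⟨x, hx⟩ := hex
    have hk := hOfix ((g * f)⁻¹ * (f * g))
      (D.mul_mem (D.inv_mem (D.mul_mem hg hf)) (D.mul_mem hf hg)) ⟨x, by
        rw [cu_mul, cu_mul f g, hx, ← cu_mul g f, CircleDeg1Lift.units_inv_apply_apply]⟩ a ha
    rw [cu_mul] at hk
    have h2 := congrArg (g * f : CU) hk
    rw [CircleDeg1Lift.units_apply_inv_apply, cu_mul, cu_mul] at h2
    exact ha'.ne h2
  rcases halt with h | h
  · exact tau_add_aux O q hqO f g (hOinv f hf) (hOinv g hg) h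
  · have := tau_add_aux O q hqO g f (hOinv g hg) (hOinv f hf) h
    have hc : τ ((f * g : CU) : CircleDeg1Lift) = τ ((g * f : CU) : CircleDeg1Lift) := by
      have := CircleDeg1Lift.translationNumber_conj_eq f ((g * f : CU) : CircleDeg1Lift)
      rw [← this]
      congr 1
      rw [← Units.val_mul, ← Units.val_mul]
      congr 1
      group
    rw [hc, this, add_comm]

end CircAct

namespace CircAct
open Filter Topology

local notation "τ" => CircleDeg1Lift.translationNumber

/-- integer translation -/
def itr (n : ℤ) : CU := CircleDeg1Lift.translate (Multiplicative.ofAdd (n : ℝ))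

theorem itr_apply (n : ℤ) (x : ℝ) : itr n x = n + x := CircleDeg1Lift.translate_apply _ _

theorem itr_comm (n : ℤ) (F : CU) : Commute (itr n) F := by
  change itr n * F = F * itr n
  apply Units.ext
  ext x
  change itr n (F x) = F (itr n x)
  rw [itr_apply, itr_apply, add_comm, add_comm (n : ℝ) x, CircleDeg1Lift.map_add_int]

theorem tau_itr (n : ℤ) (F : CU) :
    τ ((itr n * F : CU) : CircleDeg1Lift) = n + τ (F : CircleDeg1Lift) := by
  rw [Units.val_mul, CircleDeg1Lift.translationNumber_mul_of_commute]
  · rw [itr, CircleDeg1Lift.translationNumber_translate]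
  · exact (Commute.units_val (itr_comm n F))

structure LiftSys {G : Type*} [Group G] (Γ : Subgroup G) (W : Subgroup (G × CU)) : Prop where
  ex : ∀ g ∈ Γ, ∃ F, (g, F) ∈ W
  ker : ∀ F, ((1 : G), F) ∈ W → ∃ n : ℤ, F = itr n
  tr : ∀ n : ℤ, ((1 : G), itr n) ∈ W
  faith : ∀ g, (g, (1 : CU)) ∈ W → g = 1
  smooth : ∀ g F, (g, F) ∈ W → ContDiff ℝ 1 (fun x => F x)
  dne : ∀ g F, (g, F) ∈ W → ∀ x, deriv (fun x => F x) x ≠ 0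

section
variable {G : Type*} [Group G] {Γ : Subgroup G} {W : Subgroup (G × CU)}

theorem LiftSys.uniq (S : LiftSys Γ W) {g : G} {F F' : CU} (h : (g, F) ∈ W) (h' : (g, F') ∈ W) :
    ∃ n : ℤ, F' = itr n * F := by
  have := W.mul_mem h' (W.inv_mem h)
  have h2 : ((1 : G), F' * F⁻¹) ∈ W := by simpa using this
  obtain ⟨n, hn⟩ := S.ker _ h2
  exact ⟨n, by rw [← hn]; group⟩

theorem LiftSys.itr_mem (S : LiftSys Γ W) {g : G} {F : CU} (h : (g, F) ∈ W) (n : ℤ) :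
    (g, itr n * F) ∈ W := by
  simpa using W.mul_mem (S.tr n) h

theorem LiftSys.comm (S : LiftSys Γ W) {g h : G} (hc : Commute g h) {F H : CU}
    (hF : (g, F) ∈ W) (hH : (h, H) ∈ W) : Commute F H := by
  have h1 := W.mul_mem (W.mul_mem hF hH) (W.inv_mem hF)
  have h2 : (h, F * H * F⁻¹) ∈ W := by
    have e : g * h * g⁻¹ = h := by rw [hc.eq]; group
    simpa [e] using h1
  obtain ⟨n, hn⟩ := S.uniq hH h2
  have h3 : τ ((F * H * F⁻¹ : CU) : CircleDeg1Lift) = τ (H : CircleDeg1Lift) := by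
    rw [Units.val_mul, Units.val_mul]
    exact CircleDeg1Lift.translationNumber_conj_eq F H
  rw [hn, tau_itr] at h3
  have h4 : n = 0 := by
    have : (n : ℝ) = 0 := by linarith
    exact_mod_cast this
  have h5 : itr 0 = 1 := by
    apply Units.ext; ext x
    change itr 0 x = x
    rw [itr_apply]; simp
  rw [h4, h5, one_mul] at hn
  change F * H = H * F
  nth_rewrite 2 [← hn]
  group

/-- lifts of elements of `Δ` -/
def DD (W : Subgroup (G × CU)) (Δ : Subgroup G) : Subgroup CU :=
  (W ⊓ Δ.comap (MonoidHom.fst G CU)).map (MonoidHom.snd G CU)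

theorem mem_DD {Δ : Subgroup G} {F : CU} : F ∈ DD W Δ ↔ ∃ g ∈ Δ, (g, F) ∈ W := by
  simp only [DD, Subgroup.mem_map, Subgroup.mem_inf, Subgroup.mem_comap]
  constructor
  · rintro ⟨⟨g, F'⟩, ⟨h1, h2⟩, rfl⟩; exact ⟨g, h2, h1⟩
  · rintro ⟨g, h1, h2⟩; exact ⟨(g, F), ⟨h2, h1⟩, rfl⟩

/-- the global fixed point property -/
def GF (W : Subgroup (G × CU)) (Δ : Subgroup G) (q : ℝ) : Prop :=
  ∀ f ∈ DD W Δ, (∃ x, f x = x) → f q = q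

/-- elements with a lift fixing `q` -/
def MM (W : Subgroup (G × CU)) (Δ : Subgroup G) (q : ℝ) : Subgroup G where
  carrier := {g | g ∈ Δ ∧ ∃ F : CU, (g, F) ∈ W ∧ F q = q}
  one_mem' := ⟨Δ.one_mem, 1, W.one_mem, rfl⟩
  mul_mem' := by
    rintro a b ⟨ha, F, hF, hFq⟩ ⟨hb, H, hH, hHq⟩
    exact ⟨Δ.mul_mem ha hb, F * H, W.mul_mem hF hH, by rw [cu_mul, hHq, hFq]⟩
  inv_mem' := by
    rintro a ⟨ha, F, hF, hFq⟩
    exact ⟨Δ.inv_mem ha, F⁻¹, W.inv_mem hF, cu_inv_fix F hFq⟩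

variable {Δ : Subgroup G} {q : ℝ}

theorem MM_conj (S : LiftSys Γ W) (hΔ : Δ ≤ Γ) (hq : GF W Δ q) {d m : G} (hd : d ∈ Δ)
    (hm : m ∈ MM W Δ q) : d * m * d⁻¹ ∈ MM W Δ q := by
  obtain ⟨hm1, F, hF, hFq⟩ := hm
  obtain ⟨H, hH⟩ := S.ex d (hΔ hd)
  have h1 := Δ.mul_mem (Δ.mul_mem hd hm1) (Δ.inv_mem hd)
  have h2 := W.mul_mem (W.mul_mem hH hF) (W.inv_mem hH)
  refine ⟨h1, H * F * H⁻¹, h2, hq _ (mem_DD.2 ⟨_, h1, h2⟩) ⟨H q, ?_⟩⟩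
  rw [cu_mul, cu_mul, CircleDeg1Lift.units_inv_apply_apply, hFq]

open Classical in
def Tau (W : Subgroup (G × CU)) (g : G) : ℝ :=
  if h : ∃ F, (g, F) ∈ W then τ (h.choose : CircleDeg1Lift) else 0

theorem Tau_spec (S : LiftSys Γ W) {g : G} {F : CU} (h : (g, F) ∈ W) :
    ∃ n : ℤ, Tau W g = n + τ (F : CircleDeg1Lift) := by
  have hx : ∃ F, (g, F) ∈ W := ⟨F, h⟩
  obtain ⟨n, hn⟩ := S.uniq h hx.choose_spec
  exact ⟨n, by rw [Tau, dif_pos hx, hn, tau_itr]⟩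

theorem Tau_mul (S : LiftSys Γ W) (hΔ : Δ ≤ Γ) (hq : GF W Δ q) {g h : G} (hg : g ∈ Δ) (hh : h ∈ Δ) :
    ∃ n : ℤ, Tau W (g * h) = Tau W g + Tau W h + n := by
  obtain ⟨F, hF⟩ := S.ex g (hΔ hg)
  obtain ⟨H, hH⟩ := S.ex h (hΔ hh)
  obtain ⟨a, ha⟩ := Tau_spec S hF
  obtain ⟨b, hb⟩ := Tau_spec S hH
  obtain ⟨c, hc⟩ := Tau_spec S (W.mul_mem hF hH : (g * h, F * H) ∈ W)
  have := tau_add (DD W Δ) q hq F H (mem_DD.2 ⟨g, hg, hF⟩) (mem_DD.2 ⟨h, hh, hH⟩)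
  refine ⟨c - a - b, ?_⟩
  rw [ha, hb, hc, this]; push_cast; ring

theorem Tau_int (S : LiftSys Γ W) (hΔ : Δ ≤ Γ) (hq : GF W Δ q) {g : G} (hg : g ∈ Δ)
    (h : ∃ n : ℤ, Tau W g = n) : g ∈ MM W Δ q := by
  obtain ⟨n, hn⟩ := h
  obtain ⟨F, hF⟩ := S.ex g (hΔ hg)
  obtain ⟨a, ha⟩ := Tau_spec S hF
  have h1 := S.itr_mem hF (a - n)
  have h2 : τ ((itr (a - n) * F : CU) : CircleDeg1Lift) = (0 : ℤ) := by
    rw [tau_itr]; push_cast; linarith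
  obtain ⟨x, hx⟩ := (CircleDeg1Lift.translationNumber_eq_int_iff _ (cu_cont _)).1 h2
  exact ⟨hg, _, h1, hq _ (mem_DD.2 ⟨g, hg, h1⟩) ⟨x, by simpa using hx⟩⟩

theorem rat_of_dual {t : ℝ} (h : ∀ l : ℝ →ₗ[ℚ] ℚ, l 1 = 0 → l t = 0) : ∃ r : ℚ, t = r := by
  by_contra hc
  have h1 : t ∉ Submodule.span ℚ ({1} : Set ℝ) := by
    intro hm
    obtain ⟨r, hr⟩ := Submodule.mem_span_singleton.1 hm
    exact hc ⟨r, by rw [← hr, Rat.smul_def]; simp⟩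
  obtain ⟨f, hf1, hf2⟩ := Submodule.exists_dual_map_eq_bot_of_notMem h1 inferInstance
  refine hf1 (h f ?_)
  have : f 1 ∈ (Submodule.span ℚ ({1} : Set ℝ)).map f :=
    Submodule.mem_map_of_mem (Submodule.mem_span_singleton_self 1)
  rw [hf2] at this
  simpa using this

theorem Tau_rat (S : LiftSys Γ W) (hΔ : Δ ≤ Γ) (hq : GF W Δ q) {A : Sys G} {KP KQ : Subgroup F2}
    [KQ.FiniteIndex] (hG : HG A Δ KP KQ) {u : F2} (hu : u ∈ KP) (v : F2) :
    ∃ r : ℚ, Tau W (A.R (cc v u)) = r := by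
  apply rat_of_dual
  intro l hl
  have hli : ∀ n : ℤ, l (n : ℝ) = 0 := by
    intro n
    have : (n : ℝ) = (n : ℚ) • (1 : ℝ) := by rw [Rat.smul_def]; simp
    rw [this, map_smul, hl, smul_zero]
  have hadd : AddOn Δ (fun g => ((l (Tau W g) : ℚ) : ℝ)) := by
    intro g hg h hh
    obtain ⟨n, hn⟩ := Tau_mul S hΔ hq hg hh
    simp only [hn, map_add, hli]
    push_cast; ring
  have := kill_hom hadd (fun i => hG.hT i u hu) (fun v => hG.hc u hu v) hG.hQ v
  exact_mod_cast this

theorem fin_index_of_rat (S : LiftSys Γ W) (hΔ : Δ ≤ Γ) (hq : GF W Δ q) (ψ : F2 →* G)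
    (K : Subgroup F2) [K.FiniteIndex] (hK : ∀ u ∈ K, ψ u ∈ Δ)
    (hr : ∀ u ∈ K, ∃ r : ℚ, Tau W (ψ u) = r) :
    ((MM W Δ q).comap ψ).FiniteIndex := by
  let χ : K →* Multiplicative (AddCircle (1 : ℝ)) := MonoidHom.mk'
    (fun u => Multiplicative.ofAdd ((Tau W (ψ u.1) : ℝ) : AddCircle (1 : ℝ))) (by
      intro a b
      obtain ⟨n, hn⟩ := Tau_mul S hΔ hq (hK a a.2) (hK b b.2)
      rw [← ofAdd_add]
      congr 1
      rw [Subgroup.coe_mul, map_mul, hn]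
      rw [AddCircle.coe_add, AddCircle.coe_add]
      have : ((n : ℝ) : AddCircle (1 : ℝ)) = 0 := by
        rw [AddCircle.coe_eq_zero_iff]; exact ⟨n, by simp⟩
      rw [this, add_zero])
  have hfg : Group.FG K := inferInstance
  have : Finite χ.range := by
    have : Group.FG χ.range := Group.fg_of_surjective χ.rangeRestrict_surjective
    apply CommGroup.finite_of_fg_isMulTorsion
    rintro ⟨_, u, rfl⟩
    obtain ⟨r, hr⟩ := hr u.1 u.2
    rw [isOfFinOrder_iff_pow_eq_one]
    refine ⟨r.den, r.den_pos, Subtype.ext ?_⟩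
    change (Multiplicative.ofAdd ((Tau W (ψ u.1) : ℝ) : AddCircle (1 : ℝ))) ^ r.den = 1
    rw [← ofAdd_nsmul, ← ofAdd_zero]
    congr 1
    rw [hr, ← AddCircle.coe_nsmul, AddCircle.coe_eq_zero_iff]
    refine ⟨r.num, ?_⟩
    have h1 : (r : ℝ) * (r.den : ℝ) = r.num := by exact_mod_cast Rat.mul_den_eq_num r
    simp only [zsmul_eq_mul, nsmul_eq_mul, mul_one]
    rw [← h1, mul_comm]
  have hki : χ.ker.FiniteIndex := Subgroup.finiteIndex_ker χ
  have h2 : (χ.ker.map K.subtype).FiniteIndex := by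
    constructor
    rw [Subgroup.index_map_subtype]
    exact mul_ne_zero hki.index_ne_zero Subgroup.FiniteIndex.index_ne_zero
  refine Subgroup.finiteIndex_of_le (H := χ.ker.map K.subtype) ?_
  rintro _ ⟨u, hu, rfl⟩
  apply Tau_int S hΔ hq (hK _ u.2)
  have h3 : χ u = 1 := hu
  have h4 : ((Tau W (ψ u.1) : ℝ) : AddCircle (1 : ℝ)) = 0 := h3
  rw [AddCircle.coe_eq_zero_iff] at h4
  obtain ⟨n, hn⟩ := h4
  exact ⟨n, by simpa using hn.symm⟩

theorem half_good (S : LiftSys Γ W) (hΔ : Δ ≤ Γ) (hq : GF W Δ q) {A : Sys G} {K : Subgroup F2}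
    [K.FiniteIndex] (hG : HG A Δ K K) :
    ∃ K' : Subgroup F2, K'.FiniteIndex ∧ K' ≤ K ∧ ∀ u ∈ K', ∀ v, A.R (cc v u) ∈ MM W Δ q := by
  obtain ⟨V, hV⟩ := coset_reps K
  let ψ : F2 → F2 →* G := fun w => A.R.comp ((MulAut.conj (iQ w)).toMonoidHom.comp iP)
  have hψ : ∀ w u, ψ w u = A.R (cc w u) := by intro w u; simp [ψ, cc]
  have hfi : ∀ w, ((MM W Δ q).comap (ψ w)).FiniteIndex := fun w =>
    fin_index_of_rat S hΔ hq (ψ w) K (fun u hu => by rw [hψ]; exact hG.hc u hu w)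
      (fun u hu => by rw [hψ]; exact Tau_rat S hΔ hq hG hu w)
  have hfi2 : (⨅ w : V, (MM W Δ q).comap (ψ w)).FiniteIndex :=
    Subgroup.finiteIndex_iInf fun w => hfi w
  refine ⟨K ⊓ ⨅ w : V, (MM W Δ q).comap (ψ w), inferInstance, inf_le_left, fun u hu v => ?_⟩
  obtain ⟨κ, hκ, w, hw, rfl⟩ := hV v
  have h1 : A.R (cc w u) ∈ MM W Δ q := by
    have := (Subgroup.mem_iInf.1 hu.2) ⟨w, hw⟩
    rw [← hψ]; exact this
  rw [cc_mul_left, map_mul, map_mul, map_inv]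
  exact MM_conj S hΔ hq (hG.hQ κ hκ) h1

theorem cc_one (u : F2) : cc 1 u = iP u := by simp [cc]

open Classical in
def LL (W : Subgroup (G × CU)) (q : ℝ) (g : G) (x : ℝ) : ℝ :=
  if h : ∃ F : CU, (g, F) ∈ W ∧ F q = q then h.choose x else x

theorem LL_spec (S : LiftSys Γ W) {g : G} {F : CU} (h : (g, F) ∈ W) (hF : F q = q) :
    LL W q g = fun x => F x := by
  funext x
  have hx : ∃ F : CU, (g, F) ∈ W ∧ F q = q := ⟨F, h, hF⟩
  have h2 := hx.choose_spec
  obtain ⟨n, hn⟩ := S.uniq h h2.1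
  have h3 := h2.2
  rw [hn, cu_mul, hF, itr_apply] at h3
  have h4 : (n : ℝ) = 0 := by linarith
  rw [LL, dif_pos hx, hn, cu_mul, itr_apply, h4, zero_add]

theorem circle_contra (S : LiftSys Γ W) (hΔ : Δ ≤ Γ) (hq : GF W Δ q) {A A' : Sys G}
    (hsw : ∀ w, A'.R w = A.R (sw w)) (hinj : Function.Injective A.R) (B B' : Fin 2 → Sys G)
    (hB : ∀ i u, A.T i u = (B i).R (iP u)) (hB' : ∀ i u, A'.T i u = (B' i).R (iP u))
    {K : Subgroup F2} [K.FiniteIndex] (hA : HG A Δ K K) (hA' : HG A' Δ K K)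
    (hBG : ∀ i, HG (B i) Δ K K) (hBG' : ∀ i, HG (B' i) Δ K K) : False := by
  obtain ⟨K1, i1, k1, h1⟩ := half_good S hΔ hq hA
  obtain ⟨K2, i2, k2, h2⟩ := half_good S hΔ hq hA'
  choose K3 i3 k3 h3 using fun i => half_good S hΔ hq (hBG i)
  choose K4 i4 k4 h4 using fun i => half_good S hΔ hq (hBG' i)
  have i5 : (⨅ i, K3 i).FiniteIndex := Subgroup.finiteIndex_iInf i3
  have i6 : (⨅ i, K4 i).FiniteIndex := Subgroup.finiteIndex_iInf i4
  have hL : LineAct (MM W Δ q) (LL W q) := by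
    refine ⟨?_, ?_, ?_, ?_, ?_⟩
    · intro x; rw [LL_spec S W.one_mem (cu_one q)]; rfl
    · rintro g ⟨_, F, hF, hFq⟩ h ⟨_, H, hH, hHq⟩ x
      rw [LL_spec S hF hFq, LL_spec S hH hHq,
        LL_spec S (W.mul_mem hF hH : (g * h, F * H) ∈ W) (by rw [cu_mul, hHq, hFq])]
      rfl
    · rintro g ⟨_, F, hF, hFq⟩
      rw [LL_spec S hF hFq]; exact cu_smono F
    · rintro g ⟨_, F, hF, hFq⟩
      rw [LL_spec S hF hFq]; exact S.smooth g F hF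
    · rintro g ⟨_, F, hF, hFq⟩
      rw [LL_spec S hF hFq]; exact S.dne g F hF
  refine line_contra hL (q0 := q) ?_ ?_ ?_ hsw hinj (KP := K1 ⊓ ⨅ i, K3 i) (KQ := K2 ⊓ ⨅ i, K4 i)
    ⟨?_, ?_, ?_⟩ ⟨?_, ?_, ?_⟩
  · rintro g ⟨_, F, hF, hFq⟩
    rw [LL_spec S hF hFq]; exact hFq
  · rintro g ⟨_, F, hF, hFq⟩ x
    rw [LL_spec S hF hFq]; exact CircleDeg1Lift.map_add_one _ _
  · rintro g ⟨_, F, hF, hFq⟩ hx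
    rw [LL_spec S hF hFq] at hx
    have : F = 1 := by
      apply Units.ext; ext x; exact hx x
    rw [this] at hF
    exact S.faith g hF
  · intro i u hu
    rw [hB, ← cc_one]
    exact h3 i u (Subgroup.mem_iInf.1 hu.2 i) 1
  · intro u hu v; exact h1 u hu.1 v
  · intro κ hκ
    have := h2 κ hκ.1 1
    rwa [cc_one, hsw, sw_iP] at this
  · intro i u hu
    rw [hB', ← cc_one]
    exact h4 i u (Subgroup.mem_iInf.1 hu.2 i) 1
  · intro u hu v; exact h2 u hu.1 v
  · intro κ hκ
    have := h1 κ hκ.1 1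
    rwa [cc_one, ← sw_iQ, ← hsw] at this

end

end CircAct

namespace CircAct
open Filter Topology

theorem int_const {h : ℝ → ℝ} (hc : Continuous h) (hi : ∀ x, ∃ n : ℤ, h x = n) (x y : ℝ) :
    h x ≤ h y := by
  by_contra hlt
  push Not at hlt
  obtain ⟨a, ha⟩ := hi x
  obtain ⟨b, hb⟩ := hi y
  rw [ha, hb] at hlt
  have hba : b + 1 ≤ a := by exact_mod_cast hlt
  have hba' : (b : ℝ) + 1 ≤ a := by exact_mod_cast hba
  obtain ⟨z, hz⟩ := mem_range_of_exists_le_of_exists_ge hc (c := (b : ℝ) + 1 / 2)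
    ⟨y, by rw [hb]; linarith⟩ ⟨x, by rw [ha]; linarith⟩
  obtain ⟨c, hc⟩ := hi z
  rw [hc] at hz
  have h1 : (b : ℝ) < c := by linarith
  have h2 : (c : ℝ) < b + 1 := by linarith
  have h1' : b < c := by exact_mod_cast h1
  have h2' : c < b + 1 := by exact_mod_cast h2
  omega

section
variable {G : Type*} [Group G] {Γ : Subgroup G}

theorem c1_mul {f g : Equiv.Perm 𝕊} {F H : CU} (hF : IsC1Lift f F) (hH : IsC1Lift g H) :
    IsC1Lift (f * g) ((F * H : CU) : CircleDeg1Lift) := by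
  obtain ⟨⟨-, -, -, hF1⟩, hF2, hF3⟩ := hF
  obtain ⟨⟨-, -, -, hH1⟩, hH2, hH3⟩ := hH
  have e : (((F * H : CU) : CircleDeg1Lift) : ℝ → ℝ) = (F : ℝ → ℝ) ∘ (H : ℝ → ℝ) := rfl
  refine ⟨⟨cu_cont _, cu_smono _, CircleDeg1Lift.map_add_one _, fun x => ?_⟩, ?_, fun x => ?_⟩
  · rw [Equiv.Perm.mul_apply, hH1, hF1]; rfl
  · rw [e]; exact hF2.comp hH2
  · rw [e, deriv_comp x (hF2.differentiable one_ne_zero _) (hH2.differentiable one_ne_zero _)]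
    exact mul_ne_zero (hF3 _) (hH3 _)

theorem c1_inv {f : Equiv.Perm 𝕊} {F : CU} (hF : IsC1Lift f F) :
    IsC1Lift f⁻¹ ((F⁻¹ : CU) : CircleDeg1Lift) := by
  obtain ⟨⟨-, -, -, hF1⟩, hF2, hF3⟩ := hF
  have hs : ContDiff ℝ 1 ((F⁻¹ : CU) : CircleDeg1Lift) :=
    (CircleDeg1Lift.toOrderIso F).toHomeomorph.contDiff_symm_deriv (f' := deriv F) hF3
      (fun x => (hF2.differentiable one_ne_zero x).hasDerivAt) hF2
  refine ⟨⟨cu_cont _, cu_smono _, CircleDeg1Lift.map_add_one _, fun x => ?_⟩, hs, fun x => ?_⟩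
  · rw [Equiv.Perm.inv_eq_iff_eq, hF1, CircleDeg1Lift.units_apply_inv_apply]
  · intro h0
    have h1 : (F : ℝ → ℝ) ∘ ((F⁻¹ : CU) : CircleDeg1Lift) = id := by
      funext y; exact CircleDeg1Lift.units_apply_inv_apply F y
    have h2 := deriv_comp x (hF2.differentiable one_ne_zero _) (hs.differentiable one_ne_zero x)
    rw [h1, h0, mul_zero, deriv_id] at h2
    exact one_ne_zero h2

theorem c1_itr (n : ℤ) : IsC1Lift 1 (itr n : CircleDeg1Lift) := by
  have e : ((itr n : CircleDeg1Lift) : ℝ → ℝ) = fun x => (n : ℝ) + x := by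
    funext x; exact itr_apply n x
  refine ⟨⟨cu_cont _, cu_smono _, CircleDeg1Lift.map_add_one _, fun x => ?_⟩, ?_, fun x => ?_⟩
  · rw [itr_apply, AddCircle.coe_add]
    have : ((n : ℝ) : 𝕊) = 0 := by
      rw [AddCircle.coe_eq_zero_iff]; exact ⟨n, by simp⟩
    rw [this, zero_add]; rfl
  · rw [e]; exact contDiff_const.add contDiff_id
  · rw [e]; simp

theorem itr_zero : itr 0 = 1 := by
  apply Units.ext; ext x
  change itr 0 x = x
  rw [itr_apply]; simp

/-- the group of pairs of an element with a lift -/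
def WW (ρ : Γ →* Equiv.Perm 𝕊) : Subgroup (G × CU) where
  carrier := {p | ∃ h : p.1 ∈ Γ, IsC1Lift (ρ ⟨p.1, h⟩) p.2}
  one_mem' := by
    refine ⟨Γ.one_mem, ?_⟩
    have h : ρ ⟨1, Γ.one_mem⟩ = 1 := map_one ρ
    have := c1_itr 0
    rw [itr_zero] at this
    change IsC1Lift (ρ ⟨1, Γ.one_mem⟩) ((1 : CU) : CircleDeg1Lift)
    rw [h]; exact this
  mul_mem' := by
    rintro ⟨a, F⟩ ⟨b, H⟩ ⟨ha, hF⟩ ⟨hb, hH⟩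
    refine ⟨Γ.mul_mem ha hb, ?_⟩
    have h : ρ ⟨a * b, Γ.mul_mem ha hb⟩ = ρ ⟨a, ha⟩ * ρ ⟨b, hb⟩ := map_mul ρ ⟨a, ha⟩ ⟨b, hb⟩
    change IsC1Lift (ρ ⟨a * b, Γ.mul_mem ha hb⟩) ((F * H : CU) : CircleDeg1Lift)
    rw [h]; exact c1_mul hF hH
  inv_mem' := by
    rintro ⟨a, F⟩ ⟨ha, hF⟩
    refine ⟨Γ.inv_mem ha, ?_⟩
    have h : ρ ⟨a⁻¹, Γ.inv_mem ha⟩ = (ρ ⟨a, ha⟩)⁻¹ := map_inv ρ ⟨a, ha⟩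
    change IsC1Lift (ρ ⟨a⁻¹, Γ.inv_mem ha⟩) ((F⁻¹ : CU) : CircleDeg1Lift)
    rw [h]; exact c1_inv hF

theorem liftSys (ρ : Γ →* Equiv.Perm 𝕊) (hρ : ∀ g : Γ, IsC1Diffeo (ρ g))
    (hinj : Function.Injective ρ) : LiftSys Γ (WW ρ) := by
  refine ⟨?_, ?_, ?_, ?_, ?_, ?_⟩
  · intro g hg
    obtain ⟨F, hF⟩ := hρ ⟨g, hg⟩
    let F1 : CircleDeg1Lift := ⟨⟨F, hF.1.2.1.monotone⟩, hF.1.2.2.1⟩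
    have hsurj : Function.Surjective F1 := (CircleDeg1Lift.continuous_iff_surjective F1).1 hF.1.1
    obtain ⟨U, hU⟩ := CircleDeg1Lift.isUnit_iff_bijective.2
      (⟨hF.1.2.1.injective, hsurj⟩ : Function.Bijective F1)
    refine ⟨U, hg, ?_⟩
    change IsC1Lift (ρ ⟨g, hg⟩) (U : CircleDeg1Lift)
    rw [hU]; exact hF
  · rintro F ⟨h, hF⟩
    have h1 : ρ ⟨1, h⟩ = 1 := map_one ρ
    have h2 : ∀ x : ℝ, ∃ n : ℤ, F x - x = n := by
      intro x
      have := hF.1.2.2.2 x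
      change ρ ⟨1, h⟩ (x : 𝕊) = ((F x : ℝ) : 𝕊) at this
      rw [h1, Equiv.Perm.one_apply] at this
      have h3 : ((F x - x : ℝ) : 𝕊) = 0 := by rw [AddCircle.coe_sub, ← this, sub_self]
      rw [AddCircle.coe_eq_zero_iff] at h3
      obtain ⟨n, hn⟩ := h3
      exact ⟨n, by simpa using hn.symm⟩
    have hc : Continuous (fun x => F x - x) := (cu_cont F).sub continuous_id
    obtain ⟨n, hn⟩ := h2 0
    refine ⟨n, ?_⟩
    apply Units.ext; ext x
    change F x = itr n x
    have a := int_const hc h2 x 0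
    have b := int_const hc h2 0 x
    rw [itr_apply]
    linarith
  · intro n
    refine ⟨Γ.one_mem, ?_⟩
    have h : ρ ⟨1, Γ.one_mem⟩ = 1 := map_one ρ
    change IsC1Lift (ρ ⟨1, Γ.one_mem⟩) (itr n : CircleDeg1Lift)
    rw [h]; exact c1_itr n
  · rintro g ⟨hg, hF⟩
    have : ρ ⟨g, hg⟩ = 1 := by
      ext x
      induction x using QuotientAddGroup.induction_on with
      | H x => exact hF.1.2.2.2 x
    rw [← map_one ρ] at this
    exact congrArg Subtype.val (hinj this)
  · rintro g F ⟨hg, hF⟩; exact hF.2.1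
  · rintro g F ⟨hg, hF⟩; exact hF.2.2

end

end CircAct

namespace CircAct
open Filter Topology

section
variable {α β : Type*} [DecidableEq β]

/-- `y ↦ y * ι(w)`, other letters fixed -/
def trE (y : β) (ι : α → β) (w : FreeGroup α) : FreeGroup β →* FreeGroup β :=
  FreeGroup.lift (fun b => if b = y then FreeGroup.of y * FreeGroup.map ι w else FreeGroup.of b)

theorem trE_self (y : β) (ι : α → β) (w : FreeGroup α) :
    trE y ι w (FreeGroup.of y) = FreeGroup.of y * FreeGroup.map ι w := by simp [trE]

theorem trE_ne (y : β) (ι : α → β) (w : FreeGroup α) {b : β} (h : b ≠ y) :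
    trE y ι w (FreeGroup.of b) = FreeGroup.of b := by simp [trE, h]

theorem trE_map {γ : Type*} (y : β) (ι : α → β) (w : FreeGroup α) (ι' : γ → β)
    (h : ∀ a, ι' a ≠ y) (v : FreeGroup γ) :
    trE y ι w (FreeGroup.map ι' v) = FreeGroup.map ι' v := by
  have : (trE y ι w).comp (FreeGroup.map ι') = FreeGroup.map ι' := by
    ext a; simp [trE_ne y ι w (h a)]
  exact DFunLike.congr_fun this v

theorem trE_mul (y : β) (ι : α → β) (h : ∀ a, ι a ≠ y) (w w' : FreeGroup α) :
    trE y ι (w * w') = (trE y ι w).comp (trE y ι w') := by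
  ext b
  rw [MonoidHom.comp_apply]
  by_cases hb : b = y
  · subst hb
    rw [trE_self, trE_self, map_mul, map_mul, trE_self, trE_map _ _ _ _ h, mul_assoc]
  · rw [trE_ne _ _ _ hb, trE_ne _ _ _ hb, trE_ne _ _ _ hb]

theorem trE_one (y : β) (ι : α → β) : trE y ι (1 : FreeGroup α) = MonoidHom.id _ := by
  ext b
  by_cases hb : b = y
  · subst hb; rw [trE_self]; simp
  · rw [trE_ne _ _ _ hb]; rfl

def tr (y : β) (ι : α → β) (h : ∀ a, ι a ≠ y) : FreeGroup α →* MulAut (FreeGroup β) where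
  toFun w := MonoidHom.toMulEquiv (trE y ι w) (trE y ι w⁻¹)
    (by rw [← trE_mul y ι h, inv_mul_cancel, trE_one])
    (by rw [← trE_mul y ι h, mul_inv_cancel, trE_one])
  map_one' := by
    ext x
    change trE y ι 1 x = x
    rw [trE_one]; rfl
  map_mul' w w' := by
    ext x
    change trE y ι (w * w') x = trE y ι w (trE y ι w' x)
    rw [trE_mul y ι h]; rfl

theorem tr_apply (y : β) (ι : α → β) (h : ∀ a, ι a ≠ y) (w : FreeGroup α) (x : FreeGroup β) :
    tr y ι h w x = trE y ι w x := rfl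

theorem aut_ext {f g : MulAut (FreeGroup β)} (h : ∀ b, f (FreeGroup.of b) = g (FreeGroup.of b)) :
    f = g := by
  have : f.toMonoidHom = g.toMonoidHom := by ext b; exact h b
  ext x
  exact DFunLike.congr_fun this x

/-- index letters of a system -/
abbrev Lam : Type := Option (Fin 2 ⊕ Fin 2)

def sysE (e : Lam ↪ β) : Sys (MulAut (FreeGroup β)) where
  R := tr (e none) (fun a => e (some a)) (fun a => by simp)
  T i := tr (e (some (Sum.inr i))) (fun a => e (some (Sum.inl a))) (fun a => by simp)
  rel i u w := by
    rw [mul_inv_eq_iff_eq_mul]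
    apply aut_ext
    intro b
    rw [MulAut.mul_apply, MulAut.mul_apply]
    simp only [tr_apply]
    by_cases hb : b = e none
    · subst hb
      rw [trE_ne _ _ _ (by simp : e none ≠ e (some (Sum.inr i))), trE_self, trE_self, map_mul,
        trE_ne _ _ _ (by simp : e none ≠ e (some (Sum.inr i)))]
      congr 1
      have : (trE (e (some (Sum.inr i))) (fun a => e (some (Sum.inl a))) u).comp
          (FreeGroup.map (fun a => e (some a))) =
          (FreeGroup.map (fun a => e (some a))).comp (phi i u) := by
        ext a
        rcases a with k | k
        · simp [phi, trE]
        · by_cases hk : k = i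
          · subst hk
            have h2 : (FreeGroup.map (fun a => e (some a))) (iP u) =
                FreeGroup.map (fun a => e (some (Sum.inl a))) u := by
              rw [iP, FreeGroup.map.comp]; rfl
            simp [phi, trE, h2]
          · simp [phi, trE, hk]
      exact DFunLike.congr_fun this w
    · rw [trE_ne _ _ _ hb]
      by_cases hb2 : b = e (some (Sum.inr i))
      · subst hb2
        rw [trE_self, map_mul, trE_ne _ _ _ hb, trE_map _ _ _ _ (by simp)]
      · rw [trE_ne _ _ _ hb2, trE_ne _ _ _ hb]

theorem sysE_inj (e : Lam ↪ β) : Function.Injective (sysE e).R := by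
  intro w w' h
  have h1 := DFunLike.congr_fun h (FreeGroup.of (e none))
  have hR : ∀ w, (sysE e).R w (FreeGroup.of (e none)) =
      trE (e none) (fun a => e (some a)) w (FreeGroup.of (e none)) := fun _ => rfl
  rw [hR, hR] at h1
  rw [trE_self, trE_self] at h1
  have h2 := mul_left_cancel h1
  exact FreeGroup.map_injective (fun a b hab => by simpa using hab) h2

def swL (e : Lam ↪ β) : Lam ↪ β :=
  (Equiv.optionCongr (Equiv.sumComm (Fin 2) (Fin 2))).toEmbedding.trans e

theorem sysE_sw (e : Lam ↪ β) (w : E4) : (sysE (swL e)).R w = (sysE e).R (sw w) := by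
  ext x
  change trE _ _ w _ = trE _ _ (sw w) _
  congr 1
  have : FreeGroup.map (fun a => swL e (some a)) w = FreeGroup.map (fun a => e (some a)) (sw w) := by
    rw [sw, FreeGroup.map.comp]; rfl
  unfold trE
  rw [this]; rfl

def rotL (e : Lam ↪ β) (i : Fin 2) : Lam ↪ β :=
  (Equiv.swap none (some (Sum.inr i))).toEmbedding.trans e

theorem sysE_rot (e : Lam ↪ β) (i : Fin 2) (u : F2) :
    (sysE e).T i u = (sysE (rotL e i)).R (iP u) := by
  ext x
  change trE _ _ u _ = trE _ _ (iP u) _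
  congr 1
  have h0 : rotL e i none = e (some (Sum.inr i)) := by simp [rotL]
  have : FreeGroup.map (fun a => rotL e i (some a)) (iP u) =
      FreeGroup.map (fun a => e (some (Sum.inl a))) u := by
    rw [iP, FreeGroup.map.comp]
    congr 1
  unfold trE
  rw [this, h0]

/-- automorphisms supported on a set of letters -/
def suppS (X : Set β) : Set (MulAut (FreeGroup β)) :=
  {g | (∀ b ∉ X, g (FreeGroup.of b) = FreeGroup.of b) ∧
    ∀ b ∈ X, g (FreeGroup.of b) ∈ Subgroup.closure (FreeGroup.of '' X)}

theorem suppS_comm {X Y : Set β} (hXY : Disjoint X Y) {g h : MulAut (FreeGroup β)}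
    (hg : g ∈ suppS X) (hh : h ∈ suppS Y) : g * h = h * g := by
  have key : ∀ {X Y : Set β}, Disjoint X Y → ∀ {g h : MulAut (FreeGroup β)},
      g ∈ suppS X → h ∈ suppS Y → ∀ b ∈ X, g (h (FreeGroup.of b)) = h (g (FreeGroup.of b)) := by
    intro X Y hXY g h hg hh b hb
    rw [hh.1 b (fun hbY => Set.disjoint_left.1 hXY hb hbY)]
    have h1 : Subgroup.closure (FreeGroup.of '' X) ≤
        MonoidHom.eqLocus h.toMonoidHom (MonoidHom.id _) := by
      rw [Subgroup.closure_le]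
      rintro _ ⟨c, hc, rfl⟩
      exact hh.1 c (fun hcY => Set.disjoint_left.1 hXY hc hcY)
    exact (h1 (hg.2 b hb)).symm
  apply aut_ext
  intro b
  rw [MulAut.mul_apply, MulAut.mul_apply]
  by_cases hX : b ∈ X
  · exact key hXY hg hh b hX
  by_cases hY : b ∈ Y
  · exact (key hXY.symm hh hg b hY).symm
  rw [hg.1 b hX, hh.1 b hY, hg.1 b hX]

def AX (X : Set β) : Subgroup (MulAut (FreeGroup β)) := Subgroup.closure (suppS X)

theorem AX_comm {X Y : Set β} (hXY : Disjoint X Y) {g h : MulAut (FreeGroup β)}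
    (hg : g ∈ AX X) (hh : h ∈ AX Y) : Commute g h := by
  have h1 : ∀ k ∈ suppS Y, ∀ g ∈ AX X, Commute g k := by
    intro k hk g hg
    have : AX X ≤ Subgroup.centralizer {k} := by
      rw [AX, Subgroup.closure_le]
      intro a ha
      rw [SetLike.mem_coe, Subgroup.mem_centralizer_singleton_iff]
      exact suppS_comm hXY ha hk
    exact Subgroup.mem_centralizer_singleton_iff.1 (this hg)
  have h2 : AX Y ≤ Subgroup.centralizer {g} := by
    rw [AX, Subgroup.closure_le]
    intro a ha
    rw [SetLike.mem_coe, Subgroup.mem_centralizer_singleton_iff]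
    exact (h1 a ha g hg).symm
  exact (Subgroup.mem_centralizer_singleton_iff.1 (h2 hh)).symm

theorem tr_mem {X : Set β} (y : β) (ι : α → β) (h : ∀ a, ι a ≠ y) (hy : y ∈ X)
    (hι : ∀ a, ι a ∈ X) (w : FreeGroup α) : tr y ι h w ∈ AX X := by
  apply Subgroup.subset_closure
  have hof : ∀ b ∈ X, FreeGroup.of b ∈ Subgroup.closure (FreeGroup.of '' X) :=
    fun b hb => Subgroup.subset_closure ⟨b, hb, rfl⟩
  refine ⟨fun b hb => ?_, fun b hb => ?_⟩
  · rw [tr_apply, trE_ne]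
    rintro rfl; exact hb hy
  · rw [tr_apply]
    by_cases hby : b = y
    · subst hby
      rw [trE_self]
      refine Subgroup.mul_mem _ (hof _ hb) ?_
      induction w using FreeGroup.induction_on with
      | C1 => simp
      | of a => simpa using hof _ (hι a)
      | inv_of a _ => simpa using hof _ (hι a)
      | mul a b ha hb => rw [map_mul]; exact Subgroup.mul_mem _ ha hb
    · rw [trE_ne _ _ _ hby]; exact hof _ hb

theorem sysE_R_mem {X : Set β} (e : Lam ↪ β) (he : ∀ a, e a ∈ X) (w : E4) :
    (sysE e).R w ∈ AX X := tr_mem _ _ (fun a => by simp) (he _) (fun _ => he _) w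

theorem sysE_T_mem {X : Set β} (e : Lam ↪ β) (he : ∀ a, e a ∈ X) (i : Fin 2) (u : F2) :
    (sysE e).T i u ∈ AX X := tr_mem _ _ (fun a => by simp) (he _) (fun _ => he _) u

end

section
variable {G : Type*} [Group G]

theorem fi_comap {G' : Type*} [Group G'] (N : Subgroup G) [N.FiniteIndex] (f : G' →* G) :
    (N.comap f).FiniteIndex := by
  constructor
  rw [Subgroup.index_comap]
  exact (inferInstance : (N.subgroupOf f.range).FiniteIndex).index_ne_zero

theorem exists_K (N : Subgroup G) [N.Normal] [N.FiniteIndex] (A : Sys G) (X : Subgroup G)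
    (hR : ∀ w, A.R w ∈ X) (hT : ∀ i u, A.T i u ∈ X) :
    ∃ K : Subgroup F2, K.FiniteIndex ∧ ∀ K' ≤ K, HG A (N ⊓ X) K' K' := by
  have i1 : (⨅ i, N.comap (A.T i)).FiniteIndex := Subgroup.finiteIndex_iInf fun i => fi_comap N _
  have i2 := fi_comap N (A.R.comp iP)
  have i3 := fi_comap N (A.R.comp iQ)
  refine ⟨N.comap (A.R.comp iP) ⊓ N.comap (A.R.comp iQ) ⊓ ⨅ i, N.comap (A.T i), inferInstance,
    fun K' hK' => ⟨?_, ?_, ?_⟩⟩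
  · intro i u hu
    exact ⟨Subgroup.mem_iInf.1 (hK' hu).2 i, hT i u⟩
  · intro u hu v
    refine ⟨?_, hR _⟩
    rw [cc, map_mul, map_mul, map_inv]
    have h1 : A.R (iP u) ∈ N := (hK' hu).1.1
    exact Subgroup.Normal.conj_mem inferInstance _ h1 _
  · intro κ hκ
    exact ⟨(hK' hκ).1.2, hR _⟩

end

end CircAct

namespace CircAct

theorem one_side {n : ℕ} {Γ : Subgroup (AutF n)} [Γ.FiniteIndex] {W : Subgroup (AutF n × CU)}
    (S : LiftSys Γ W) (e : Lam ↪ Fin n) (X : Set (Fin n)) (he : ∀ a, e a ∈ X) {q : ℝ}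
    (hq : GF W (Γ.normalCore ⊓ AX X) q) : False := by
  have key : ∀ e : Lam ↪ Fin n, (∀ a, e a ∈ X) → ∃ K : Subgroup F2, K.FiniteIndex ∧
      ∀ K' ≤ K, HG (sysE e) (Γ.normalCore ⊓ AX X) K' K' := fun e he =>
    exists_K Γ.normalCore (sysE e) (AX X) (sysE_R_mem e he) (sysE_T_mem e he)
  have he' : ∀ a, swL e a ∈ X := fun a => he _
  obtain ⟨K1, i1, h1⟩ := key e he
  obtain ⟨K2, i2, h2⟩ := key (swL e) he'
  choose K3 i3 h3 using fun i => key (rotL e i) (fun a => he _)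
  choose K4 i4 h4 using fun i => key (rotL (swL e) i) (fun a => he' _)
  have i5 : (⨅ i, K3 i).FiniteIndex := Subgroup.finiteIndex_iInf i3
  have i6 : (⨅ i, K4 i).FiniteIndex := Subgroup.finiteIndex_iInf i4
  refine circle_contra S (inf_le_left.trans Γ.normalCore_le) hq (sysE_sw e) (sysE_inj e)
    (fun i => sysE (rotL e i)) (fun i => sysE (rotL (swL e) i)) (sysE_rot e) (sysE_rot (swL e))
    (K := (K1 ⊓ K2) ⊓ ((⨅ i, K3 i) ⊓ ⨅ i, K4 i)) (h1 _ ?_) (h2 _ ?_) (fun i => h3 i _ ?_)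
    (fun i => h4 i _ ?_)
  · exact inf_le_left.trans inf_le_left
  · exact inf_le_left.trans inf_le_right
  · exact inf_le_right.trans (inf_le_left.trans (iInf_le _ i))
  · exact inf_le_right.trans (inf_le_right.trans (iInf_le _ i))

theorem exists_emb {n : ℕ} (hn : 10 ≤ n) : ∃ e1 e2 : Lam ↪ Fin n,
    Disjoint (Set.range e1) (Set.range e2) := by
  have hc : Fintype.card (Lam ⊕ Lam) ≤ Fintype.card (Fin n) := by simp; omega
  obtain ⟨f⟩ := Function.Embedding.nonempty_of_card_le hc
  refine ⟨Function.Embedding.inl.trans f, Function.Embedding.inr.trans f, ?_⟩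
  rw [Set.disjoint_left]
  rintro _ ⟨a, rfl⟩ ⟨b, hb⟩
  simpa using f.injective hb

end CircAct

/-- For `n ≥ 10`, any orientation preserving `C¹` action of an arbitrary
finite index subgroup `Γ` of `Aut(Fₙ)` on the circle cannot be faithful. -/
theorem aut_finite_index_action_not_faithful
    (n : ℕ) (hn : 10 ≤ n)
    (Γ : Subgroup (AutF n)) [Γ.FiniteIndex]
    (ρ : Γ →* Equiv.Perm 𝕊) (hρ : ∀ g : Γ, IsC1Diffeo (ρ g)) :
    ¬ Function.Injective ρ := by
  intro hinj
  have S := CircAct.liftSys ρ hρ hinj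
  obtain ⟨e1, e2, hd⟩ := CircAct.exists_emb hn
  rcases CircAct.commuting_alt
      (CircAct.DD (CircAct.WW ρ) (Γ.normalCore ⊓ CircAct.AX (Set.range e1)))
      (CircAct.DD (CircAct.WW ρ) (Γ.normalCore ⊓ CircAct.AX (Set.range e2))) (by
        intro a ha b hb
        obtain ⟨g, hg, hga⟩ := CircAct.mem_DD.1 ha
        obtain ⟨h, hh, hhb⟩ := CircAct.mem_DD.1 hb
        exact S.comm (CircAct.AX_comm hd hg.2 hh.2) hga hhb) with ⟨q, hq⟩ | ⟨q, hq⟩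
  · exact CircAct.one_side S e1 (Set.range e1) (fun a => Set.mem_range_self a) hq
  · exact CircAct.one_side S e2 (Set.range e2) (fun a => Set.mem_range_self a) hq
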